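/- arXiv:0912.3301 — 15 statements merged into one kernel-verified Lean document; each statement's English description precedes it below -/
import Mathlib

section
/- Let ℓ₁, ℓ₋₁ : [0,1] → [0,∞) be continuous on [0,1] and differentiable on (0,1). Then the CPE loss ℓ is proper if and only if for every η̂ ∈ (0,1) one has η̂·ℓ₁′(η̂) + (1−η̂)·ℓ₋₁′(η̂) = 0 and ℓ₋₁′(η̂) ≥ 0; equivalently, −ℓ₁′(η̂)/(1−η̂) = ℓ₋₁′(η̂)/η̂ = w(η̂) for all η̂ ∈ (0,1), for some nonnegative weight function w : (0,1) → [0,∞). -/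
/-!
For fixed `η`, the conditional risk `p ↦ η * l1 p + (1 - η) * ln1 p` is differentiable on `(0,1)`.

If the loss is proper, this function has an interior minimum at `p = η`, so Fermat's theorem gives
the stationarity identity. Adding `p` times the properness inequality at `(η, p)` to `η` times the
one at `(p, η)` eliminates `l1` and leaves `(p - η) * (ln1 η - ln1 p) ≤ 0`, so `ln1` is monotone
and `ln1' ≥ 0`.

Conversely, the stationarity identity shows that the derivative of the conditional risk times `p`
equals `(p - η) * ln1' p`. Hence the risk decreases on `[0, η]` and increases on `[η, 1]`, with
minimum at `η`; continuity covers the endpoints. The weight form is algebra, with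
`w p = ln1' p / p`.
-/

open Set

/-- A CPE loss with partial losses `l1, ln1` continuous on `[0,1]` and differentiable on
`(0,1)` is proper iff the Shuford stationarity condition holds together with
`ln1' ≥ 0`; equivalently iff there is a nonnegative weight function `w` with
`-l1'(p)/(1-p) = ln1'(p)/p = w(p)` on `(0,1)`. -/
theorem proper_iff_partial_losses_linked
    (l1 ln1 l1' ln1' : ℝ → ℝ)
    (hl1nn : ∀ x ∈ Icc (0:ℝ) 1, 0 ≤ l1 x)
    (hln1nn : ∀ x ∈ Icc (0:ℝ) 1, 0 ≤ ln1 x)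
    (hl1c : ContinuousOn l1 (Icc (0:ℝ) 1))
    (hln1c : ContinuousOn ln1 (Icc (0:ℝ) 1))
    (hl1d : ∀ x ∈ Ioo (0:ℝ) 1, HasDerivAt l1 (l1' x) x)
    (hln1d : ∀ x ∈ Ioo (0:ℝ) 1, HasDerivAt ln1 (ln1' x) x) :
    ((∀ η ∈ Icc (0:ℝ) 1, ∀ p ∈ Icc (0:ℝ) 1,
        η * l1 η + (1 - η) * ln1 η ≤ η * l1 p + (1 - η) * ln1 p) ↔
      (∀ p ∈ Ioo (0:ℝ) 1, p * l1' p + (1 - p) * ln1' p = 0 ∧ 0 ≤ ln1' p)) ∧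
    ((∀ p ∈ Ioo (0:ℝ) 1, p * l1' p + (1 - p) * ln1' p = 0 ∧ 0 ≤ ln1' p) ↔
      (∃ w : ℝ → ℝ, ∀ p ∈ Ioo (0:ℝ) 1,
        0 ≤ w p ∧ -l1' p / (1 - p) = w p ∧ ln1' p / p = w p)) := by
  refine ⟨⟨fun h => ?_, fun h η hη p hp => ?_⟩, ⟨fun h => ?_, ?_⟩⟩
  · have hmono : MonotoneOn ln1 (Ioo (0:ℝ) 1) := by
      intro a ha b hb hab
      have hab1 := h a (Ioo_subset_Icc_self ha) b (Ioo_subset_Icc_self hb)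
      have hba := h b (Ioo_subset_Icc_self hb) a (Ioo_subset_Icc_self ha)
      rcases hab.eq_or_lt with rfl | hlt
      · exact le_rfl
      have h1 := mul_le_mul_of_nonneg_left hab1 hb.1.le
      have h2 := mul_le_mul_of_nonneg_left hba ha.1.le
      have h3 : (b - a) * ln1 a ≤ (b - a) * ln1 b := by linarith
      exact le_of_mul_le_mul_left h3 (sub_pos.2 hlt)
    intro p hp
    constructor
    · have hmin : IsLocalMin (fun x => p * l1 x + (1 - p) * ln1 x) p := by
        filter_upwards [Ioo_mem_nhds hp.1 hp.2] with x hx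
        exact h p (Ioo_subset_Icc_self hp) x (Ioo_subset_Icc_self hx)
      exact hmin.hasDerivAt_eq_zero
        (((hl1d p hp).const_mul p).add ((hln1d p hp).const_mul (1 - p)))
    · have h0 := hmono.derivWithin_nonneg (x := p)
      rwa [derivWithin_of_isOpen isOpen_Ioo hp, (hln1d p hp).deriv] at h0
  · have hd : ∀ x ∈ Ioo (0:ℝ) 1, HasDerivAt (fun x => η * l1 x + (1 - η) * ln1 x)
        (η * l1' x + (1 - η) * ln1' x) x := fun x hx =>
      ((hl1d x hx).const_mul η).add ((hln1d x hx).const_mul (1 - η))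
    have hc : ContinuousOn (fun x => η * l1 x + (1 - η) * ln1 x) (Icc (0:ℝ) 1) :=
      (continuousOn_const.mul hl1c).add (continuousOn_const.mul hln1c)
    have hkey : ∀ x ∈ Ioo (0:ℝ) 1,
        x * (η * l1' x + (1 - η) * ln1' x) = (x - η) * ln1' x := by
      intro x hx
      linear_combination η * (h x hx).1
    rcases le_total p η with hpη | hηp
    · have hsub : Ioo 0 η ⊆ Ioo (0:ℝ) 1 := Ioo_subset_Ioo_right hη.2
      have hanti : AntitoneOn (fun x => η * l1 x + (1 - η) * ln1 x) (Icc 0 η) := by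
        refine antitoneOn_of_deriv_nonpos (convex_Icc 0 η)
          (hc.mono (Icc_subset_Icc_right hη.2)) ?_ ?_
        · rw [interior_Icc]
          exact fun x hx => (hd x (hsub hx)).differentiableAt.differentiableWithinAt
        · rw [interior_Icc]
          intro x hx
          rw [(hd x (hsub hx)).deriv]
          refine nonpos_of_mul_nonpos_right ?_ hx.1
          rw [hkey x (hsub hx)]
          exact mul_nonpos_of_nonpos_of_nonneg (sub_nonpos.2 hx.2.le) (h x (hsub hx)).2
      exact hanti ⟨hp.1, hpη⟩ ⟨hη.1, le_rfl⟩ hpη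
    · have hsub : Ioo η 1 ⊆ Ioo (0:ℝ) 1 := Ioo_subset_Ioo_left hη.1
      have hmono : MonotoneOn (fun x => η * l1 x + (1 - η) * ln1 x) (Icc η 1) := by
        refine monotoneOn_of_deriv_nonneg (convex_Icc η 1)
          (hc.mono (Icc_subset_Icc_left hη.1)) ?_ ?_
        · rw [interior_Icc]
          exact fun x hx => (hd x (hsub hx)).differentiableAt.differentiableWithinAt
        · rw [interior_Icc]
          intro x hx
          rw [(hd x (hsub hx)).deriv]
          refine nonneg_of_mul_nonneg_right ?_ (hsub hx).1
          rw [hkey x (hsub hx)]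
          exact mul_nonneg (sub_nonneg.2 hx.1.le) (h x (hsub hx)).2
      exact hmono ⟨le_rfl, hη.2⟩ ⟨hηp, hp.2⟩ hηp
  · refine ⟨fun p => ln1' p / p, fun p hp => ⟨div_nonneg (h p hp).2 hp.1.le, ?_, rfl⟩⟩
    rw [div_eq_div_iff (sub_pos.2 hp.2).ne' hp.1.ne']
    linear_combination -(h p hp).1
  · rintro ⟨w, hw⟩ p hp
    obtain ⟨h0, h1, h2⟩ := hw p hp
    rw [div_eq_iff (sub_pos.2 hp.2).ne'] at h1
    rw [div_eq_iff hp.1.ne'] at h2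
    refine ⟨?_, ?_⟩
    · linear_combination -p * h1 + (1 - p) * h2
    · rw [h2]
      exact mul_nonneg h0 hp.1.le
end

section
/- (Savage) Let ℓ₁, ℓ₋₁ : (0,1) → [0,∞) be the partial losses of a CPE loss, let L̲(η) := inf_{η̂∈(0,1)} L(η,η̂), and assume L̲ is differentiable on (0,1). Then ℓ is proper on (0,1) (i.e. L(η,η) ≤ L(η,η̂) for all η,η̂ ∈ (0,1)) if and only if L̲ is concave on (0,1) and L(η,η̂) = L̲(η̂) + (η − η̂)·L̲′(η̂) for all η, η̂ ∈ (0,1). -/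
open Set

/-!
Write `L(η,p) = η * l1 p + (1 - η) * ln1 p`, which is affine in `η`. The partial losses being
nonnegative, `Lb η ≤ L(η,p)` always holds, and properness is equivalent to `Lb η = L(η,η)`.
If the loss is proper, then for each `p` the affine function `L(·,p)` lies above `Lb` and touches
it at `p`: this makes `Lb` concave, and Fermat's rule at the contact point identifies the slope
`l1 p - ln1 p` as `Lb' p`, so `L(·,p)` is the tangent line. Conversely, the tangent formula with
`η = p` gives `L(p,p) = Lb p`.
-/

/-- (Savage) A CPE loss with nonnegative partial losses on `(0,1)` and differentiable
conditional Bayes risk `Lb` is proper on `(0,1)` iff `Lb` is concave on `(0,1)` and the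
conditional risk satisfies `L(η,p) = Lb(p) + (η - p)·Lb'(p)` for all `η, p ∈ (0,1)`. -/
theorem savage_characterisation_of_properness
    (l1 ln1 Lb Lb' : ℝ → ℝ)
    (hl1nn : ∀ x ∈ Ioo (0:ℝ) 1, 0 ≤ l1 x)
    (hln1nn : ∀ x ∈ Ioo (0:ℝ) 1, 0 ≤ ln1 x)
    (hLb : ∀ η ∈ Ioo (0:ℝ) 1,
      Lb η = sInf ((fun p => η * l1 p + (1 - η) * ln1 p) '' Ioo (0:ℝ) 1))
    (hLbd : ∀ x ∈ Ioo (0:ℝ) 1, HasDerivAt Lb (Lb' x) x) :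
    (∀ η ∈ Ioo (0:ℝ) 1, ∀ p ∈ Ioo (0:ℝ) 1,
        η * l1 η + (1 - η) * ln1 η ≤ η * l1 p + (1 - η) * ln1 p) ↔
      (ConcaveOn ℝ (Ioo (0:ℝ) 1) Lb ∧
        ∀ η ∈ Ioo (0:ℝ) 1, ∀ p ∈ Ioo (0:ℝ) 1,
          η * l1 p + (1 - η) * ln1 p = Lb p + (η - p) * Lb' p) := by
  have hle : ∀ η ∈ Ioo (0:ℝ) 1, ∀ p ∈ Ioo (0:ℝ) 1, Lb η ≤ η * l1 p + (1 - η) * ln1 p := by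
    intro η hη p hp
    rw [hLb η hη]
    refine csInf_le ⟨0, ?_⟩ ⟨p, hp, rfl⟩
    rintro _ ⟨q, hq, rfl⟩
    exact add_nonneg (mul_nonneg hη.1.le (hl1nn q hq))
      (mul_nonneg (sub_nonneg.2 hη.2.le) (hln1nn q hq))
  constructor
  · intro hprop
    have heq : ∀ η ∈ Ioo (0:ℝ) 1, Lb η = η * l1 η + (1 - η) * ln1 η := by
      intro η hη
      refine le_antisymm (hle η hη η hη) ?_
      rw [hLb η hη]
      refine le_csInf ⟨_, η, hη, rfl⟩ ?_
      rintro _ ⟨q, hq, rfl⟩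
      exact hprop η hη q hq
    refine ⟨⟨convex_Ioo 0 1, ?_⟩, ?_⟩
    · intro x hx y hy a b ha hb hab
      have hc := convex_Ioo (0:ℝ) 1 hx hy ha hb hab
      -- Compare `Lb` at `x` and `y` with the affine function touching it at `a • x + b • y`.
      have h1 := mul_le_mul_of_nonneg_left (hle x hx _ hc) ha
      have h2 := mul_le_mul_of_nonneg_left (hle y hy _ hc) hb
      rw [heq _ hc]
      generalize l1 (a • x + b • y) = u at *
      generalize ln1 (a • x + b • y) = v at *
      simp only [smul_eq_mul]
      obtain rfl : b = 1 - a := by linarith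
      linarith
    · intro η hη p hp
      have hd : HasDerivAt (fun t => t * l1 p + (1 - t) * ln1 p - Lb t)
          (1 * l1 p + (-1) * ln1 p - Lb' p) p :=
        (((hasDerivAt_id p).mul_const _).add
          (((hasDerivAt_id p).const_sub 1).mul_const _)).sub (hLbd p hp)
      have hmin : IsLocalMin (fun t => t * l1 p + (1 - t) * ln1 p - Lb t) p := by
        filter_upwards [isOpen_Ioo.mem_nhds hp] with t ht
        have h1 := hle t ht p hp
        have h2 := heq p hp
        linarith
      have h0 := hmin.hasDerivAt_eq_zero hd
      have hs : Lb' p = l1 p - ln1 p := by linarith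
      rw [heq p hp, hs]
      ring
  · rintro ⟨-, htan⟩ η hη p hp
    have h := htan η hη η hη
    rw [sub_self, zero_mul, add_zero] at h
    rw [h]
    exact hle η hη p hp
end

section
/- Let ℓ be a fair proper CPE loss (ℓ₋₁(0) = ℓ₁(1) = 0) with partial losses continuous on [0,1] and differentiable on (0,1), and weight function w(c) = ℓ₋₁′(c)/c. Then ℓ is symmetric, i.e. ℓ₁(η̂) = ℓ₋₁(1−η̂) for all η̂ ∈ [0,1], if and only if its weight function is symmetric, i.e. w(c) = w(1−c) for all c ∈ (0,1). -/
/-!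
Properness says that `p ↦ c * l1 p + (1 - c) * ln1 p` is minimal at `p = c`, so Fermat's theorem gives
the stationarity relation `c * l1' c + (1 - c) * ln1' c = 0` on `(0,1)`. Given this relation, symmetry
of the weight is equivalent to `l1' c = -ln1' (1 - c)`, that is, to the vanishing of the derivative of
`p ↦ l1 p - ln1 (1 - p)` on `(0,1)`. Fairness makes this function vanish at `1`, so by the mean value
theorem its derivative vanishes on `(0,1)` iff the function vanishes on `[0,1]`.
-/

open Set

/-- A fair proper CPE loss with partial losses continuous on `[0,1]` and differentiable on
`(0,1)` is symmetric (`l1(p) = ln1(1-p)`) iff its weight function `w(c) = ln1'(c)/c`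
is symmetric (`w(c) = w(1-c)`). -/
theorem symmetric_loss_iff_symmetric_weight
    (l1 ln1 l1' ln1' : ℝ → ℝ)
    (hl1nn : ∀ x ∈ Icc (0:ℝ) 1, 0 ≤ l1 x)
    (hln1nn : ∀ x ∈ Icc (0:ℝ) 1, 0 ≤ ln1 x)
    (hl1c : ContinuousOn l1 (Icc (0:ℝ) 1))
    (hln1c : ContinuousOn ln1 (Icc (0:ℝ) 1))
    (hl1d : ∀ x ∈ Ioo (0:ℝ) 1, HasDerivAt l1 (l1' x) x)
    (hln1d : ∀ x ∈ Ioo (0:ℝ) 1, HasDerivAt ln1 (ln1' x) x)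
    (hfair1 : ln1 0 = 0) (hfair2 : l1 1 = 0)
    (hproper : ∀ η ∈ Icc (0:ℝ) 1, ∀ p ∈ Icc (0:ℝ) 1,
      η * l1 η + (1 - η) * ln1 η ≤ η * l1 p + (1 - η) * ln1 p) :
    (∀ p ∈ Icc (0:ℝ) 1, l1 p = ln1 (1 - p)) ↔
      (∀ c ∈ Ioo (0:ℝ) 1, ln1' c / c = ln1' (1 - c) / (1 - c)) := by
  have hrefl : ∀ c ∈ Ioo (0:ℝ) 1, 1 - c ∈ Ioo (0:ℝ) 1 := fun c hc =>
    ⟨by linarith [hc.2], by linarith [hc.1]⟩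
  have hstat : ∀ c ∈ Ioo (0:ℝ) 1, c * l1' c + (1 - c) * ln1' c = 0 := by
    intro c hc
    have hmin : IsLocalMin (fun p => c * l1 p + (1 - c) * ln1 p) c := by
      filter_upwards [Ioo_mem_nhds hc.1 hc.2] with p hp
      exact hproper c (Ioo_subset_Icc_self hc) p (Ioo_subset_Icc_self hp)
    exact hmin.hasDerivAt_eq_zero
      (((hl1d c hc).const_mul c).add ((hln1d c hc).const_mul (1 - c)))
  have hdiff : ∀ c ∈ Ioo (0:ℝ) 1,
      HasDerivAt (fun p => l1 p - ln1 (1 - p)) (l1' c + ln1' (1 - c)) c := by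
    intro c hc
    have h := (hl1d c hc).sub ((hln1d (1 - c) (hrefl c hc)).comp c ((hasDerivAt_id c).const_sub 1))
    exact h.congr_deriv (by ring)
  have hiff : ∀ c ∈ Ioo (0:ℝ) 1,
      (ln1' c / c = ln1' (1 - c) / (1 - c) ↔ l1' c + ln1' (1 - c) = 0) := by
    intro c hc
    have hs := hstat c hc
    have h0 : c ≠ 0 := hc.1.ne'
    have h1 : 1 - c ≠ 0 := (hrefl c hc).1.ne'
    rw [div_eq_div_iff h0 h1]
    constructor
    · intro h
      apply mul_left_cancel₀ h0
      linear_combination hs - h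
    · intro h
      linear_combination hs - c * h
  constructor
  · intro hsym c hc
    refine (hiff c hc).2 ((hdiff c hc).unique ((hasDerivAt_const c (0:ℝ)).congr_of_eventuallyEq ?_))
    filter_upwards [Ioo_mem_nhds hc.1 hc.2] with p hp
    rw [hsym p (Ioo_subset_Icc_self hp), sub_self]
  · intro hw p hp
    rcases hp.2.eq_or_lt with rfl | hp1
    · rw [hfair2, sub_self, hfair1]
    have hcont : ContinuousOn (fun p => l1 p - ln1 (1 - p)) (Icc (0:ℝ) 1) :=
      hl1c.sub (hln1c.comp (by fun_prop) fun x hx => ⟨by linarith [hx.2], by linarith [hx.1]⟩)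
    have hsub : Ioo p 1 ⊆ Ioo (0:ℝ) 1 := Ioo_subset_Ioo_left hp.1
    obtain ⟨c, hc, hslope⟩ := exists_hasDerivAt_eq_slope _ _ hp1
      (hcont.mono (Icc_subset_Icc_left hp.1)) fun x hx => hdiff x (hsub hx)
    rw [(hiff c (hsub hc)).1 (hw c (hsub hc)), eq_comm,
      div_eq_zero_iff, or_iff_left (sub_pos.2 hp1).ne'] at hslope
    simp only [hfair2, sub_self, hfair1] at hslope
    linarith
end

section
/- (Integral representation) Let ℓ be a fair proper CPE loss (ℓ₋₁(0) = ℓ₁(1) = 0) with partial losses continuous on [0,1] and continuously differentiable on (0,1), and weight function w(c) = ℓ₋₁′(c)/c. Then for every η̂ ∈ (0,1): ℓ₁(η̂) = ∫_{η̂}^{1} (1−c)·w(c) dc and ℓ₋₁(η̂) = ∫_{0}^{η̂} c·w(c) dc; equivalently ℓ(y,η̂) = ∫₀¹ ℓ_c(y,η̂)·w(c) dc where ℓ_c is the cost-weighted misclassification loss. Conversely, if w : (0,1) → [0,∞) is continuous with ∫₀¹ c·w(c) dc < ∞ and ∫₀¹ (1−c)·w(c) dc < ∞, and the partial losses are defined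 by these two integral formulas, then the resulting CPE loss is proper and fair. -/
/-!
**Forward direction.** Comparing the properness inequalities at `(η, p)` and `(p, η)` shows that
`ln1` is nondecreasing and `l1` nonincreasing on `[0,1]`. Hence `ln1'` and `-l1'` are nonnegative
on `(0,1)`, which makes them integrable up to the endpoints, and the fundamental theorem of
calculus together with fairness gives `ln1 p = ∫_0^p ln1'` and `l1 p = ∫_p^1 (-l1')`. Since
`q ↦ L(c, q)` is minimal at `q = c`, the first-order condition `c l1'(c) + (1-c) ln1'(c) = 0` holds,
so `-l1'(c) = (1-c) w(c)` for `w(c) = ln1'(c)/c`. The representations through the cost-weighted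
losses are the same integrals, written with indicator functions.

**Converse.** The regret `L(η, p) - L(η, η)` equals the signed integral `∫_η^p (c - η) w(c) dc`
(`regret_nonneg` below), which is nonnegative whichever of `η` and `p` is larger.
-/

open Set MeasureTheory

/-- The fundamental theorem of calculus for a monotone function with a possibly unbounded
derivative: monotonicity makes the derivative nonnegative, which gives its integrability. -/
lemma setIntegral_deriv_of_monotoneOn {g g' : ℝ → ℝ} {a b : ℝ} (hab : a ≤ b)
    (hc : ContinuousOn g (Icc a b)) (hd : ∀ x ∈ Ioo a b, HasDerivAt g (g' x) x)
    (hm : MonotoneOn g (Icc a b)) : ∫ c in Ioo a b, g' c = g b - g a := by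
  have hpos : ∀ x ∈ Ioo a b, 0 ≤ g' x := by
    intro x hx
    have h := (hd x hx).hasDerivWithinAt (s := Ioo a b)
    rw [← h.derivWithin (isOpen_Ioo.uniqueDiffWithinAt hx)]
    exact (hm.mono Ioo_subset_Icc_self).derivWithin_nonneg
  have hint := intervalIntegral.integrableOn_deriv_of_nonneg hc hd hpos
  rw [← integral_Ioc_eq_integral_Ioo, ← intervalIntegral.integral_of_le hab]
  exact intervalIntegral.integral_eq_sub_of_hasDerivAt_of_le hab hc hd
    ((intervalIntegrable_iff_integrableOn_Ioc_of_le hab).2 hint)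

/-- Properness forces the partial losses to be monotone: with `A`, `B` the increments of `l1`,
`ln1` from `p` to `η`, it says `η A + (1-η) B ≤ 0 ≤ p A + (1-p) B`, and eliminating either
unknown determines the sign of the other. -/
lemma proper_increments {l1 ln1 : ℝ → ℝ}
    (hprop : ∀ η ∈ Icc (0:ℝ) 1, ∀ p ∈ Icc (0:ℝ) 1,
        η * l1 η + (1 - η) * ln1 η ≤ η * l1 p + (1 - η) * ln1 p)
    {p η : ℝ} (hp : p ∈ Icc (0:ℝ) 1) (hη : η ∈ Icc (0:ℝ) 1) (hlt : p < η) :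
    l1 η ≤ l1 p ∧ ln1 p ≤ ln1 η := by
  have h1 := hprop η hη p hp
  have h2 := hprop p hp η hη
  constructor
  · have h3 : 0 ≤ (η - p) * (l1 p - l1 η) := by
      nlinarith [mul_le_mul_of_nonneg_left h1 (sub_nonneg.2 hp.2),
        mul_le_mul_of_nonneg_left h2 (sub_nonneg.2 hη.2)]
    linarith [nonneg_of_mul_nonneg_right h3 (sub_pos.2 hlt)]
  · have h3 : 0 ≤ (η - p) * (ln1 η - ln1 p) := by
      nlinarith [mul_le_mul_of_nonneg_left h1 hp.1, mul_le_mul_of_nonneg_left h2 hη.1]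
    linarith [nonneg_of_mul_nonneg_right h3 (sub_pos.2 hlt)]

/-- The loss with weight `w ≥ 0` is proper: its regret is `∫ c in η..p, (c - η) * w c`. -/
lemma regret_nonneg {w : ℝ → ℝ} (hw : ∀ c ∈ Ioo (0:ℝ) 1, 0 ≤ w c)
    (h1 : IntegrableOn (fun c => c * w c) (Ioo (0:ℝ) 1))
    (h2 : IntegrableOn (fun c => (1 - c) * w c) (Ioo (0:ℝ) 1))
    {η p : ℝ} (hη : η ∈ Icc (0:ℝ) 1) (hp : p ∈ Icc (0:ℝ) 1) :
    η * (∫ c in Ioo η 1, (1 - c) * w c) + (1 - η) * (∫ c in Ioo 0 η, c * w c) ≤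
      η * (∫ c in Ioo p 1, (1 - c) * w c) + (1 - η) * (∫ c in Ioo 0 p, c * w c) := by
  have toInterval : ∀ f : ℝ → ℝ, IntegrableOn f (Ioo (0:ℝ) 1) →
      ∀ a ∈ Icc (0:ℝ) 1, ∀ b ∈ Icc (0:ℝ) 1, IntervalIntegrable f volume a b := by
    intro f hf a ha b hb
    have h : IntervalIntegrable f volume 0 1 :=
      (intervalIntegrable_iff_integrableOn_Ioo_of_le zero_le_one).2 hf
    refine h.mono_set ?_
    rw [uIcc_of_le (zero_le_one' ℝ)]
    exact uIcc_subset_Icc ha hb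
  have z : (0:ℝ) ∈ Icc (0:ℝ) 1 := ⟨le_rfl, zero_le_one⟩
  have o : (1:ℝ) ∈ Icc (0:ℝ) 1 := ⟨zero_le_one, le_rfl⟩
  simp only [← integral_Ioc_eq_integral_Ioo]
  rw [← intervalIntegral.integral_of_le hη.2, ← intervalIntegral.integral_of_le hη.1,
    ← intervalIntegral.integral_of_le hp.2, ← intervalIntegral.integral_of_le hp.1,
    ← intervalIntegral.integral_add_adjacent_intervals (toInterval _ h2 η hη p hp)
      (toInterval _ h2 p hp 1 o),
    ← intervalIntegral.integral_add_adjacent_intervals (toInterval _ h1 0 z η hη)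
      (toInterval _ h1 η hη p hp)]
  have key : (1 - η) * (∫ c in η..p, c * w c) - η * (∫ c in η..p, (1 - c) * w c)
      = ∫ c in η..p, (c - η) * w c := by
    rw [← intervalIntegral.integral_const_mul, ← intervalIntegral.integral_const_mul,
      ← intervalIntegral.integral_sub ((toInterval _ h1 η hη p hp).const_mul _)
        ((toInterval _ h2 η hη p hp).const_mul _)]
    congr 1
    ext c
    ring
  have hpos : 0 ≤ ∫ c in η..p, (c - η) * w c := by
    rcases le_total η p with h | h
    · rw [intervalIntegral.integral_of_le h, integral_Ioc_eq_integral_Ioo]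
      refine setIntegral_nonneg measurableSet_Ioo fun c hc => ?_
      exact mul_nonneg (sub_nonneg.2 hc.1.le)
        (hw c ⟨hη.1.trans_lt hc.1, hc.2.trans_le hp.2⟩)
    · rw [intervalIntegral.integral_of_ge h, integral_Ioc_eq_integral_Ioo, neg_nonneg]
      refine setIntegral_nonpos measurableSet_Ioo fun c hc => ?_
      exact mul_nonpos_of_nonpos_of_nonneg (sub_nonpos.2 hc.2.le)
        (hw c ⟨hp.1.trans_lt hc.1, hc.2.trans_le hη.2⟩)
  linarith

/-- Integral representation of fair proper CPE losses: the partial losses of a fair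
proper loss (continuous on `[0,1]`, continuously differentiable on `(0,1)`, with weight
function `w(c) = ln1'(c)/c`) are `l1(p) = ∫_p^1 (1-c)w(c)dc` and
`ln1(p) = ∫_0^p c·w(c)dc`; equivalently `ℓ(y,p) = ∫_0^1 ℓ_c(y,p)·w(c)dc` with `ℓ_c` the
cost-weighted misclassification losses.  Conversely, the loss built from any nonnegative
continuous weight `w` with `∫_0^1 c·w(c)dc < ∞` and `∫_0^1 (1-c)·w(c)dc < ∞` by these
integral formulas is proper and fair. -/
theorem integral_representation_of_fair_proper_losses :
    (∀ l1 ln1 l1' ln1' : ℝ → ℝ,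
      (∀ x ∈ Icc (0:ℝ) 1, 0 ≤ l1 x) →
      (∀ x ∈ Icc (0:ℝ) 1, 0 ≤ ln1 x) →
      ContinuousOn l1 (Icc (0:ℝ) 1) →
      ContinuousOn ln1 (Icc (0:ℝ) 1) →
      (∀ x ∈ Ioo (0:ℝ) 1, HasDerivAt l1 (l1' x) x) →
      (∀ x ∈ Ioo (0:ℝ) 1, HasDerivAt ln1 (ln1' x) x) →
      ContinuousOn l1' (Ioo (0:ℝ) 1) →
      ContinuousOn ln1' (Ioo (0:ℝ) 1) →
      ln1 0 = 0 → l1 1 = 0 →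
      (∀ η ∈ Icc (0:ℝ) 1, ∀ p ∈ Icc (0:ℝ) 1,
        η * l1 η + (1 - η) * ln1 η ≤ η * l1 p + (1 - η) * ln1 p) →
      ∀ p ∈ Ioo (0:ℝ) 1,
        l1 p = ∫ c in Ioo p 1, (1 - c) * (ln1' c / c) ∧
        ln1 p = ∫ c in Ioo 0 p, c * (ln1' c / c) ∧
        l1 p = ∫ c in Ioo (0:ℝ) 1, (if p < c then (1 - c) else 0) * (ln1' c / c) ∧
        ln1 p = ∫ c in Ioo (0:ℝ) 1, (if c ≤ p then c else 0) * (ln1' c / c)) ∧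
    (∀ w : ℝ → ℝ,
      ContinuousOn w (Ioo (0:ℝ) 1) →
      (∀ c ∈ Ioo (0:ℝ) 1, 0 ≤ w c) →
      IntegrableOn (fun c => c * w c) (Ioo (0:ℝ) 1) →
      IntegrableOn (fun c => (1 - c) * w c) (Ioo (0:ℝ) 1) →
      (∀ η ∈ Icc (0:ℝ) 1, ∀ p ∈ Icc (0:ℝ) 1,
        η * (∫ c in Ioo η 1, (1 - c) * w c) + (1 - η) * (∫ c in Ioo 0 η, c * w c) ≤
        η * (∫ c in Ioo p 1, (1 - c) * w c) + (1 - η) * (∫ c in Ioo 0 p, c * w c)) ∧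
      (∫ c in Ioo (0:ℝ) 0, c * w c) = 0 ∧ (∫ c in Ioo (1:ℝ) 1, (1 - c) * w c) = 0) := by
  refine ⟨?_, fun w _ hw h1 h2 =>
    ⟨fun η hη p hp => regret_nonneg hw h1 h2 hη hp, by simp, by simp⟩⟩
  intro l1 ln1 l1' ln1' _ _ hc1 hcn hd1 hdn _ _ h0 h1 hprop p hp
  have hmono : MonotoneOn ln1 (Icc (0:ℝ) 1) := by
    intro x hx y hy hxy
    rcases hxy.eq_or_lt with rfl | h
    · exact le_rfl
    · exact (proper_increments hprop hx hy h).2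
  have hanti : MonotoneOn (fun x => -l1 x) (Icc (0:ℝ) 1) := by
    intro x hx y hy hxy
    rcases hxy.eq_or_lt with rfl | h
    · exact le_rfl
    · exact neg_le_neg (proper_increments hprop hx hy h).1
  -- First-order condition: `q ↦ L(c, q)` has an interior minimum at `q = c`.
  have foc : ∀ c ∈ Ioo (0:ℝ) 1, c * l1' c + (1 - c) * ln1' c = 0 := by
    intro c hc
    have hmin : IsLocalMin (fun q => c * l1 q + (1 - c) * ln1 q) c := by
      filter_upwards [Ioo_mem_nhds hc.1 hc.2] with q hq
      exact hprop c (Ioo_subset_Icc_self hc) q (Ioo_subset_Icc_self hq)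
    exact hmin.hasDerivAt_eq_zero (((hd1 c hc).const_mul c).add ((hdn c hc).const_mul (1 - c)))
  have subR : Icc p 1 ⊆ Icc (0:ℝ) 1 := Icc_subset_Icc_left hp.1.le
  have subL : Icc 0 p ⊆ Icc (0:ℝ) 1 := Icc_subset_Icc_right hp.2.le
  have e1 : l1 p = ∫ c in Ioo p 1, (1 - c) * (ln1' c / c) := by
    have h := setIntegral_deriv_of_monotoneOn (g := fun x => -l1 x) (g' := fun x => -l1' x)
      hp.2.le (hc1.mono subR).neg (fun x hx => (hd1 x ⟨hp.1.trans hx.1, hx.2⟩).neg)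
      (hanti.mono subR)
    have hcongr : ∫ c in Ioo p 1, (1 - c) * (ln1' c / c) = ∫ c in Ioo p 1, -l1' c := by
      refine setIntegral_congr_fun measurableSet_Ioo fun c hc => ?_
      have hc0 : 0 < c := hp.1.trans hc.1
      have := foc c ⟨hc0, hc.2⟩
      field_simp
      linarith
    rw [hcongr, h, h1]
    ring
  have e2 : ln1 p = ∫ c in Ioo 0 p, c * (ln1' c / c) := by
    have h := setIntegral_deriv_of_monotoneOn hp.1.le (hcn.mono subL)
      (fun x hx => hdn x ⟨hx.1, hx.2.trans hp.2⟩) (hmono.mono subL)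
    have hcongr : ∫ c in Ioo 0 p, c * (ln1' c / c) = ∫ c in Ioo 0 p, ln1' c :=
      setIntegral_congr_fun measurableSet_Ioo fun c hc => mul_div_cancel₀ _ hc.1.ne'
    rw [hcongr, h, h0, sub_zero]
  refine ⟨e1, e2, e1.trans ?_, e2.trans ?_⟩
  · have hf : (fun c => (if p < c then (1 - c) else 0) * (ln1' c / c))
        = (Ioi p).indicator (fun c => (1 - c) * (ln1' c / c)) := by
      ext c
      simp [indicator_apply]
    rw [hf, setIntegral_indicator measurableSet_Ioi, Ioo_inter_Ioi, max_eq_right hp.1.le]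
  · have hf : (fun c => (if c ≤ p then c else 0) * (ln1' c / c))
        = (Iic p).indicator (fun c => c * (ln1' c / c)) := by
      ext c
      simp [indicator_apply]
    have hs : Ioo (0:ℝ) 1 ∩ Iic p = Ioc 0 p := by
      ext c
      exact ⟨fun h => ⟨h.1.1, h.2⟩, fun h => ⟨⟨h.1, h.2.trans_lt hp.2⟩, h.2⟩⟩
    rw [hf, setIntegral_indicator measurableSet_Iic, hs, integral_Ioc_eq_integral_Ioo]
end

section
/- Let ℓ be a proper and symmetric CPE loss (ℓ₁(η̂) = ℓ₋₁(1−η̂) for all η̂ ∈ [0,1]) whose partial losses are differentiable on (0,1). Then for every η̂ ∈ (0,1), ℓ₋₁′(1−η̂) = ((1−η̂)/η̂)·ℓ₋₁′(η̂). Moreover, if ℓ₋₁′ is continuous on (0,1), then for every η̂ ∈ (0,1), ℓ₋₁(η̂) = ℓ₋₁(1/2) + ∫_{1/2}^{η̂} (x/(1−x))·ℓ₋₁′(1−x) dx; hence a symmetric proper loss is completely determined by one partial loss on one half of the unit interval. -/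
/-!
For fixed `p ∈ (0,1)`, properness says that the conditional risk `q ↦ p * l1 q + (1 - p) * ln1 q`
is minimized at the interior point `q = p`, so its derivative vanishes there:
`p * l1' p + (1 - p) * ln1' p = 0`. Differentiating the symmetry relation gives
`l1' p = -ln1' (1 - p)`, and the two together are the derivative identity. The identity turns the
integrand `x / (1 - x) * ln1' (1 - x)` into `ln1' x`, so the integral formula is the fundamental
theorem of calculus.
-/

open Set

/-- For a proper and symmetric CPE loss with partial losses differentiable on `(0,1)`:
`ln1'(1-p) = ((1-p)/p)·ln1'(p)` on `(0,1)`, and if moreover `ln1'` is continuous on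
`(0,1)` then `ln1(p) = ln1(1/2) + ∫_{1/2}^p (x/(1-x))·ln1'(1-x) dx`; hence a symmetric
proper loss is determined by one partial loss on half the unit interval. -/
theorem symmetric_proper_loss_determined_by_half_partial
    (l1 ln1 l1' ln1' : ℝ → ℝ)
    (hl1nn : ∀ x ∈ Icc (0:ℝ) 1, 0 ≤ l1 x)
    (hln1nn : ∀ x ∈ Icc (0:ℝ) 1, 0 ≤ ln1 x)
    (hl1d : ∀ x ∈ Ioo (0:ℝ) 1, HasDerivAt l1 (l1' x) x)
    (hln1d : ∀ x ∈ Ioo (0:ℝ) 1, HasDerivAt ln1 (ln1' x) x)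
    (hproper : ∀ η ∈ Icc (0:ℝ) 1, ∀ p ∈ Icc (0:ℝ) 1,
      η * l1 η + (1 - η) * ln1 η ≤ η * l1 p + (1 - η) * ln1 p)
    (hsym : ∀ p ∈ Icc (0:ℝ) 1, l1 p = ln1 (1 - p)) :
    (∀ p ∈ Ioo (0:ℝ) 1, ln1' (1 - p) = ((1 - p) / p) * ln1' p) ∧
    (ContinuousOn ln1' (Ioo (0:ℝ) 1) →
      ∀ p ∈ Ioo (0:ℝ) 1,
        ln1 p = ln1 (1/2) + ∫ x in (1/2 : ℝ)..p, (x / (1 - x)) * ln1' (1 - x)) := by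
  have hderiv : ∀ p ∈ Ioo (0:ℝ) 1, ln1' (1 - p) = ((1 - p) / p) * ln1' p := by
    intro p hp
    have hnhds : Icc (0:ℝ) 1 ∈ nhds p := Icc_mem_nhds hp.1 hp.2
    have hstat : p * l1' p + (1 - p) * ln1' p = 0 := by
      have hmin : IsLocalMin (fun q => p * l1 q + (1 - p) * ln1 q) p := by
        filter_upwards [hnhds] with q hq
        exact hproper p (Ioo_subset_Icc_self hp) q hq
      exact hmin.hasDerivAt_eq_zero
        (((hl1d p hp).const_mul p).add ((hln1d p hp).const_mul (1 - p)))
    have hrefl : l1' p = -ln1' (1 - p) := by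
      have hmem : 1 - p ∈ Ioo (0:ℝ) 1 := ⟨by linarith [hp.2], by linarith [hp.1]⟩
      have hcomp : HasDerivAt (fun q => ln1 (1 - q)) (-ln1' (1 - p)) p :=
        (hln1d (1 - p) hmem).comp_const_sub 1 p
      have heq : l1 =ᶠ[nhds p] fun q => ln1 (1 - q) := by
        filter_upwards [hnhds] with q hq
        exact hsym q hq
      exact (hl1d p hp).unique (hcomp.congr_of_eventuallyEq heq)
    have hp0 : p ≠ 0 := hp.1.ne'
    rw [hrefl] at hstat
    field_simp
    linarith
  refine ⟨hderiv, fun hcont p hp => ?_⟩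
  have hsub : uIcc (1/2 : ℝ) p ⊆ Ioo (0:ℝ) 1 :=
    ordConnected_Ioo.uIcc_subset ⟨by norm_num, by norm_num⟩ hp
  have hint : ∫ x in (1/2 : ℝ)..p, (x / (1 - x)) * ln1' (1 - x)
      = ∫ x in (1/2 : ℝ)..p, ln1' x := by
    refine intervalIntegral.integral_congr fun x hx => ?_
    have hx' := hsub hx
    have hx0 : x ≠ 0 := hx'.1.ne'
    have hx1 : 1 - x ≠ 0 := (sub_pos.2 hx'.2).ne'
    simp only [hderiv x hx']
    field_simp
  rw [hint, intervalIntegral.integral_eq_sub_of_hasDerivAt (fun x hx => hln1d x (hsub hx))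
    (hcont.mono hsub).intervalIntegrable]
  ring
end

section
/- Let ψ : (0,1) → ℝ be differentiable with ψ′ > 0, let V = ψ((0,1)), and let λ₁, λ₋₁ : V → [0,∞) be differentiable. Then the composite loss with partial losses ℓ_y(η̂) := λ_y(ψ(η̂)) is proper on (0,1) (i.e. L(η,η) ≤ L(η,η̂) for all η,η̂ ∈ (0,1)) if and only if for every η̂ ∈ (0,1): η̂·λ₁′(ψ(η̂)) + (1−η̂)·λ₋₁′(ψ(η̂)) = 0 and λ₋₁′(ψ(η̂)) ≥ 0; equivalently −λ₁′(ψ(η̂))/(1−η̂) = λ₋₁′(ψ(η̂))/η̂ = w(η̂)/ψ′(η̂) for all η̂ ∈ (0,1), for some nonnegative function w on (0,1). -/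
open Set

/-!
Write `ℓ_y = g_y ∘ psi`. The map `p ↦ L(η, p)` has derivative
`(η g1'(psi p) + (1 - η) gn1'(psi p)) psi'(p)`.

If the loss is proper, `η` is an interior minimiser of `L(η, ·)`, which gives the stationarity
equation. Combining the properness inequalities for the pairs `(η, p)` and `(p, η)` so as to
cancel `ℓ₁` leaves `(p - η) (ℓ₋₁(η) - ℓ₋₁(p)) ≤ 0`, so `ℓ₋₁` is nondecreasing and `gn1' ≥ 0`.

Conversely, the stationarity equation at `p` turns `p` times the derivative of `L(η, ·)` at `p`
into `(p - η) gn1'(psi p) psi'(p)`, so `L(η, ·)` decreases on `(0, η]` and increases on `[η, 1)`.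

The weight is `w(p) = gn1'(psi p) psi'(p) / p`.
-/

/-- Characterisation of proper composite losses: with a differentiable strictly
increasing link `psi` on `(0,1)` (with `psi' > 0`) and differentiable partial losses
`g1, gn1` on `V = psi '' (0,1)`, the composite loss `ℓ_y(p) = g_y(psi p)` is proper on
`(0,1)` iff for all `p ∈ (0,1)`, `p·g1'(psi p) + (1-p)·gn1'(psi p) = 0` and
`gn1'(psi p) ≥ 0`; equivalently iff there is a nonnegative weight function `w` with
`-g1'(psi p)/(1-p) = gn1'(psi p)/p = w(p)/psi'(p)` on `(0,1)`. -/
theorem proper_composite_loss_characterisation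
    (psi psi' g1 gn1 g1' gn1' : ℝ → ℝ)
    (hpsid : ∀ x ∈ Ioo (0:ℝ) 1, HasDerivAt psi (psi' x) x)
    (hpsi'pos : ∀ x ∈ Ioo (0:ℝ) 1, 0 < psi' x)
    (hg1nn : ∀ v ∈ psi '' Ioo (0:ℝ) 1, 0 ≤ g1 v)
    (hgn1nn : ∀ v ∈ psi '' Ioo (0:ℝ) 1, 0 ≤ gn1 v)
    (hg1d : ∀ v ∈ psi '' Ioo (0:ℝ) 1, HasDerivAt g1 (g1' v) v)
    (hgn1d : ∀ v ∈ psi '' Ioo (0:ℝ) 1, HasDerivAt gn1 (gn1' v) v) :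
    ((∀ η ∈ Ioo (0:ℝ) 1, ∀ p ∈ Ioo (0:ℝ) 1,
        η * g1 (psi η) + (1 - η) * gn1 (psi η) ≤ η * g1 (psi p) + (1 - η) * gn1 (psi p)) ↔
      (∀ p ∈ Ioo (0:ℝ) 1,
        p * g1' (psi p) + (1 - p) * gn1' (psi p) = 0 ∧ 0 ≤ gn1' (psi p))) ∧
    ((∀ p ∈ Ioo (0:ℝ) 1,
        p * g1' (psi p) + (1 - p) * gn1' (psi p) = 0 ∧ 0 ≤ gn1' (psi p)) ↔
      (∃ w : ℝ → ℝ, ∀ p ∈ Ioo (0:ℝ) 1,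
        0 ≤ w p ∧ -g1' (psi p) / (1 - p) = w p / psi' p ∧
          gn1' (psi p) / p = w p / psi' p)) := by
  have hd1 : ∀ x ∈ Ioo (0:ℝ) 1, HasDerivAt (fun p => g1 (psi p)) (g1' (psi x) * psi' x) x :=
    fun x hx => (hg1d _ (mem_image_of_mem _ hx)).comp x (hpsid x hx)
  have hdn1 : ∀ x ∈ Ioo (0:ℝ) 1, HasDerivAt (fun p => gn1 (psi p)) (gn1' (psi x) * psi' x) x :=
    fun x hx => (hgn1d _ (mem_image_of_mem _ hx)).comp x (hpsid x hx)
  have hL : ∀ η : ℝ, ∀ x ∈ Ioo (0:ℝ) 1,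
      HasDerivAt (fun p => η * g1 (psi p) + (1 - η) * gn1 (psi p))
        (η * (g1' (psi x) * psi' x) + (1 - η) * (gn1' (psi x) * psi' x)) x :=
    fun η x hx => ((hd1 x hx).const_mul η).add ((hdn1 x hx).const_mul (1 - η))
  refine ⟨⟨fun h p hp => ⟨?_, ?_⟩, fun h η hη p hp => ?_⟩, ⟨fun h => ?_, ?_⟩⟩
  · have hmin : IsLocalMin (fun q => p * g1 (psi q) + (1 - p) * gn1 (psi q)) p := by
      filter_upwards [isOpen_Ioo.mem_nhds hp] with q hq using h p hp q hq
    have h0 := hmin.hasDerivAt_eq_zero (hL p p hp)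
    have hpos := hpsi'pos p hp
    have h1 : (p * g1' (psi p) + (1 - p) * gn1' (psi p)) * psi' p = 0 := by linarith
    exact (mul_eq_zero.mp h1).resolve_right hpos.ne'
  · have hmono : MonotoneOn (fun q => gn1 (psi q)) (Ioo (0:ℝ) 1) := by
      intro a ha b hb hab
      rcases hab.eq_or_lt with rfl | hlt
      · exact le_rfl
      -- the weights `b` and `a` cancel the `g1` terms
      have h1 := mul_le_mul_of_nonneg_left (h a ha b hb) hb.1.le
      have h2 := mul_le_mul_of_nonneg_left (h b hb a ha) ha.1.le
      have h3 : (b - a) * gn1 (psi a) ≤ (b - a) * gn1 (psi b) := by linarith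
      exact le_of_mul_le_mul_left h3 (sub_pos.mpr hlt)
    have hnn := hmono.derivWithin_nonneg (x := p)
    rw [derivWithin_of_isOpen isOpen_Ioo hp, (hdn1 p hp).deriv] at hnn
    exact nonneg_of_mul_nonneg_left hnn (hpsi'pos p hp)
  · have key : ∀ x ∈ Ioo (0:ℝ) 1,
        x * (η * (g1' (psi x) * psi' x) + (1 - η) * (gn1' (psi x) * psi' x))
          = (x - η) * (gn1' (psi x) * psi' x) := by
      intro x hx
      linear_combination η * psi' x * (h x hx).1
    have hw : ∀ x ∈ Ioo (0:ℝ) 1, 0 ≤ gn1' (psi x) * psi' x :=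
      fun x hx => mul_nonneg (h x hx).2 (hpsi'pos x hx).le
    rcases le_total η p with hle | hle
    · have hsub : Icc η p ⊆ Ioo (0:ℝ) 1 := fun x hx => ⟨hη.1.trans_le hx.1, hx.2.trans_lt hp.2⟩
      refine monotoneOn_of_hasDerivWithinAt_nonneg (convex_Icc η p)
        (fun x hx => (hL η x (hsub hx)).continuousAt.continuousWithinAt)
        (fun x hx => (hL η x (hsub (interior_subset hx))).hasDerivWithinAt)
        (fun x hx => ?_) (left_mem_Icc.mpr hle) (right_mem_Icc.mpr hle) hle
      have hx' := interior_subset hx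
      refine nonneg_of_mul_nonneg_right ?_ (hsub hx').1
      rw [key x (hsub hx')]
      exact mul_nonneg (sub_nonneg.mpr hx'.1) (hw x (hsub hx'))
    · have hsub : Icc p η ⊆ Ioo (0:ℝ) 1 := fun x hx => ⟨hp.1.trans_le hx.1, hx.2.trans_lt hη.2⟩
      refine antitoneOn_of_hasDerivWithinAt_nonpos (convex_Icc p η)
        (fun x hx => (hL η x (hsub hx)).continuousAt.continuousWithinAt)
        (fun x hx => (hL η x (hsub (interior_subset hx))).hasDerivWithinAt)
        (fun x hx => ?_) (left_mem_Icc.mpr hle) (right_mem_Icc.mpr hle) hle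
      have hx' := interior_subset hx
      refine nonpos_of_mul_nonpos_right ?_ (hsub hx').1
      rw [key x (hsub hx')]
      exact mul_nonpos_of_nonpos_of_nonneg (sub_nonpos.mpr hx'.2) (hw x (hsub hx'))
  · refine ⟨fun p => gn1' (psi p) * psi' p / p, fun p hp => ?_⟩
    have hpos := hpsi'pos p hp
    have hp0 : 0 < p := hp.1
    have hp1 : 0 < 1 - p := sub_pos.mpr hp.2
    obtain ⟨h1, h2⟩ := h p hp
    have hq : gn1' (psi p) * psi' p / p / psi' p = gn1' (psi p) / p := by field_simp
    refine ⟨by positivity, ?_, hq.symm⟩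
    rw [hq, div_eq_div_iff hp1.ne' hp0.ne']
    linarith
  · rintro ⟨w, hw⟩ p hp
    have hpos := hpsi'pos p hp
    have hp0 : 0 < p := hp.1
    have hp1 : 0 < 1 - p := sub_pos.mpr hp.2
    obtain ⟨h0, h1, h2⟩ := hw p hp
    have h3 : 0 ≤ w p / psi' p := by positivity
    rw [div_eq_iff hp1.ne'] at h1
    rw [div_eq_iff hp0.ne'] at h2
    refine ⟨?_, h2 ▸ by positivity⟩
    linear_combination (1 - p) * h2 - p * h1
end

section
/- Let ψ : [0,1] → ℝ be a continuous strictly increasing map onto V = ψ([0,1]), differentiable with ψ′ > 0 on (0,1), and let λ₁, λ₋₁ : V → [0,∞) be differentiable on the interior of V, with λ₁ nonincreasing, λ₋₁ nondecreasing, and λ₋₁′(v) − λ₁′(v) > 0 for all v in the interior of V. Then the composite loss with partial losses ℓ_y(η̂) = λ_y(ψ(η̂)) is proper on (0,1) if and only if ψ⁻¹(v) = λ₋₁′(v)/(λ₋₁′(v) − λ₁′(v)) for all v in the interior of V. -/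
/-!
Fix `η` and let `R p = η * g1 (psi p) + (1 - η) * gn1 (psi p)` be the conditional risk. The chain
rule gives `R' p = (η * g1' v + (1 - η) * gn1' v) * psi' p` with `v = psi p`.

If the loss is proper, `R` has an interior minimum at `p = η`, so `R' η = 0`; as `psi' η > 0`,
solving the linear equation for `η` yields the link formula. Conversely, the link formula turns the
derivative into `R' p = (p - η) * (gn1' v - g1' v) * psi' p`, which has the sign of `p - η`, so the
mean value theorem shows that `R` is smallest at `η`.
-/

open Set

/-- `η` is a global minimum on an open interval if the derivative is nonpositive to the left of `η`
and nonnegative to its right. -/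
lemma le_of_hasDerivAt_sign {R R' : ℝ → ℝ} {a b η p : ℝ}
    (hR : ∀ x ∈ Ioo a b, HasDerivAt R (R' x) x)
    (hsign : ∀ x ∈ Ioo a b, 0 ≤ (x - η) * R' x)
    (hη : η ∈ Ioo a b) (hp : p ∈ Ioo a b) : R η ≤ R p := by
  rcases lt_trichotomy η p with h | rfl | h
  · have hsub : Icc η p ⊆ Ioo a b := Icc_subset_Ioo hη.1 hp.2
    obtain ⟨c, hc, hslope⟩ := exists_hasDerivAt_eq_slope R R' h
      (fun x hx => (hR x (hsub hx)).continuousAt.continuousWithinAt)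
      (fun x hx => hR x (hsub (Ioo_subset_Icc_self hx)))
    have h0 : 0 ≤ R' c :=
      nonneg_of_mul_nonneg_right (hsign c (hsub (Ioo_subset_Icc_self hc))) (sub_pos.2 hc.1)
    rw [hslope, le_div_iff₀ (sub_pos.2 h)] at h0
    linarith
  · exact le_rfl
  · have hsub : Icc p η ⊆ Ioo a b := Icc_subset_Ioo hp.1 hη.2
    obtain ⟨c, hc, hslope⟩ := exists_hasDerivAt_eq_slope R R' h
      (fun x hx => (hR x (hsub hx)).continuousAt.continuousWithinAt)
      (fun x hx => hR x (hsub (Ioo_subset_Icc_self hx)))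
    have h0 : R' c ≤ 0 := by
      have := hsign c (hsub (Ioo_subset_Icc_self hc))
      by_contra! hpos
      nlinarith [mul_pos (sub_pos.2 hc.2) hpos]
    rw [hslope, div_le_iff₀ (sub_pos.2 h)] at h0
    linarith

/-- The link which makes a composite loss proper: with a continuous strictly increasing
link `psi : [0,1] → V = [psi 0, psi 1]` (differentiable with `psi' > 0` on `(0,1)`) and
differentiable partial losses `g1` (nonincreasing), `gn1` (nondecreasing) with
`gn1' - g1' > 0` on the interior of `V`, the composite loss is proper on `(0,1)` iff
`psi⁻¹(v) = gn1'(v)/(gn1'(v) - g1'(v))` for all `v` in the interior of `V`. -/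
theorem proper_composite_iff_link_formula
    (psi psi' g1 gn1 g1' gn1' : ℝ → ℝ)
    (hpsic : ContinuousOn psi (Icc (0:ℝ) 1))
    (hpsimono : StrictMonoOn psi (Icc (0:ℝ) 1))
    (hpsid : ∀ x ∈ Ioo (0:ℝ) 1, HasDerivAt psi (psi' x) x)
    (hpsi'pos : ∀ x ∈ Ioo (0:ℝ) 1, 0 < psi' x)
    (hg1nn : ∀ v ∈ Icc (psi 0) (psi 1), 0 ≤ g1 v)
    (hgn1nn : ∀ v ∈ Icc (psi 0) (psi 1), 0 ≤ gn1 v)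
    (hg1d : ∀ v ∈ Ioo (psi 0) (psi 1), HasDerivAt g1 (g1' v) v)
    (hgn1d : ∀ v ∈ Ioo (psi 0) (psi 1), HasDerivAt gn1 (gn1' v) v)
    (hg1anti : AntitoneOn g1 (Icc (psi 0) (psi 1)))
    (hgn1mono : MonotoneOn gn1 (Icc (psi 0) (psi 1)))
    (hgap : ∀ v ∈ Ioo (psi 0) (psi 1), 0 < gn1' v - g1' v) :
    (∀ η ∈ Ioo (0:ℝ) 1, ∀ p ∈ Ioo (0:ℝ) 1,
        η * g1 (psi η) + (1 - η) * gn1 (psi η) ≤ η * g1 (psi p) + (1 - η) * gn1 (psi p)) ↔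
      (∀ v ∈ Ioo (psi 0) (psi 1), ∀ x ∈ Ioo (0:ℝ) 1, psi x = v →
        x = gn1' v / (gn1' v - g1' v)) := by
  have hmem : ∀ x ∈ Ioo (0:ℝ) 1, psi x ∈ Ioo (psi 0) (psi 1) := fun x hx =>
    ⟨hpsimono (by simp) (Ioo_subset_Icc_self hx) hx.1,
      hpsimono (Ioo_subset_Icc_self hx) (by simp) hx.2⟩
  have hrisk : ∀ η, ∀ x ∈ Ioo (0:ℝ) 1,
      HasDerivAt (fun p => η * g1 (psi p) + (1 - η) * gn1 (psi p))
        ((η * g1' (psi x) + (1 - η) * gn1' (psi x)) * psi' x) x := by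
    intro η x hx
    have h1 := ((hg1d _ (hmem x hx)).comp x (hpsid x hx)).const_mul η
    have h2 := ((hgn1d _ (hmem x hx)).comp x (hpsid x hx)).const_mul (1 - η)
    exact (h1.add h2).congr_deriv (by ring)
  constructor
  · rintro hproper _ hv x hx rfl
    have hmin : IsLocalMin (fun p => x * g1 (psi p) + (1 - x) * gn1 (psi p)) x :=
      Filter.mem_of_superset (isOpen_Ioo.mem_nhds hx) (fun p hp => hproper x hx p hp)
    have hzero := (mul_eq_zero.1 (hmin.hasDerivAt_eq_zero (hrisk x x hx))).resolve_right
      (hpsi'pos x hx).ne'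
    rw [eq_div_iff (hgap _ hv).ne']
    linarith
  · intro hlink η hη p hp
    refine le_of_hasDerivAt_sign (hrisk η) (fun x hx => ?_) hη hp
    have hgapx := hgap _ (hmem x hx)
    have hx' := hlink _ (hmem x hx) x hx rfl
    rw [eq_div_iff hgapx.ne'] at hx'
    have hfactor : η * g1' (psi x) + (1 - η) * gn1' (psi x)
        = (x - η) * (gn1' (psi x) - g1' (psi x)) := by linarith
    have := mul_nonneg (sq_nonneg (x - η)) (mul_pos hgapx (hpsi'pos x hx)).le
    rw [hfactor]
    linarith
end

section
/- Let φ : ℝ → [0,∞) be a differentiable, nonincreasing margin loss with φ′(v) + φ′(−v) < 0 for all v ∈ ℝ, and let ψ : [0,1] → ℝ ∪ {±∞} restrict to a strictly increasing differentiable bijection from (0,1) onto ℝ with ψ′ > 0. Then the composite margin loss ℓ(y,η̂) := φ(y·ψ(η̂)) for y ∈ {−1,1} is proper on (0,1) if and only if ψ⁻¹(v) = φ′(−v)/(φ′(−v) + φ′(v)) for all v ∈ ℝ. -/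
/-!
For fixed `η`, the conditional risk as a function of the score `v = psi p` is
`F v = η * phi v + (1 - η) * phi (-v)`, with derivative
`η * phi' v - (1 - η) * phi' (-v) = η * S - phi' (-v)`, where `S = phi' v + phi' (-v) < 0`.
Since `psi` is onto, properness says that `F` has a global minimum at `psi η`, so the derivative
vanishes there, which is the link formula. Conversely, the link formula at `v = psi x` reads
`phi' (-v) = x * S`, so `F' v = (η - x) * S` has the sign of `x - η`, that is, of `v - psi η`;
hence `F` decreases up to `psi η` and increases afterwards.
-/

open Set

/-- The derivative of the conditional risk with respect to the score. -/
lemma hasDerivAt_condRisk {phi phi' : ℝ → ℝ} (hphid : ∀ v : ℝ, HasDerivAt phi (phi' v) v)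
    (η v : ℝ) :
    HasDerivAt (fun v => η * phi v + (1 - η) * phi (-v))
      (η * phi' v - (1 - η) * phi' (-v)) v := by
  have h := ((hphid v).const_mul η).add
    (((hphid (-v)).comp v (hasDerivAt_neg v)).const_mul (1 - η))
  exact h.congr_deriv (by ring)

/-- A differentiable nonincreasing margin loss `phi` with `phi'(v) + phi'(-v) < 0`,
composed with a strictly increasing differentiable link `psi` mapping `(0,1)` onto `ℝ`
with `psi' > 0`, yields a proper composite loss `ℓ(y,p) = phi(y·psi(p))` on `(0,1)` iff
`psi⁻¹(v) = phi'(-v)/(phi'(-v) + phi'(v))` for all `v ∈ ℝ`. -/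
theorem margin_loss_proper_iff_link_formula
    (phi phi' psi psi' : ℝ → ℝ)
    (hphinn : ∀ v : ℝ, 0 ≤ phi v)
    (hphid : ∀ v : ℝ, HasDerivAt phi (phi' v) v)
    (hphianti : Antitone phi)
    (hphisum : ∀ v : ℝ, phi' v + phi' (-v) < 0)
    (hpsimono : StrictMonoOn psi (Ioo (0:ℝ) 1))
    (hpsid : ∀ x ∈ Ioo (0:ℝ) 1, HasDerivAt psi (psi' x) x)
    (hpsi'pos : ∀ x ∈ Ioo (0:ℝ) 1, 0 < psi' x)
    (hpsisurj : ∀ v : ℝ, ∃ x ∈ Ioo (0:ℝ) 1, psi x = v) :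
    (∀ η ∈ Ioo (0:ℝ) 1, ∀ p ∈ Ioo (0:ℝ) 1,
        η * phi (psi η) + (1 - η) * phi (-psi η) ≤
          η * phi (psi p) + (1 - η) * phi (-psi p)) ↔
      (∀ v : ℝ, ∀ x ∈ Ioo (0:ℝ) 1, psi x = v →
        x = phi' (-v) / (phi' (-v) + phi' v)) := by
  have hF := hasDerivAt_condRisk hphid
  constructor
  · rintro h v x hx rfl
    have hmin : IsLocalMin (fun v => x * phi v + (1 - x) * phi (-v)) (psi x) := by
      refine Filter.Eventually.of_forall fun w => ?_
      obtain ⟨p, hp, rfl⟩ := hpsisurj w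
      exact h x hx p hp
    have h0 := hmin.hasDerivAt_eq_zero (hF x (psi x))
    have hS := hphisum (psi x)
    rw [eq_div_iff (by linarith)]
    linarith
  · intro h η hη p hp
    have hderiv : ∀ x ∈ Ioo (0:ℝ) 1,
        deriv (fun v => η * phi v + (1 - η) * phi (-v)) (psi x)
          = (η - x) * (phi' (psi x) + phi' (-psi x)) := by
      intro x hx
      have hS := hphisum (psi x)
      have hx' := h _ x hx rfl
      rw [eq_div_iff (by linarith)] at hx'
      rw [(hF η (psi x)).deriv]
      linarith
    have hdiff : Differentiable ℝ (fun v => η * phi v + (1 - η) * phi (-v)) :=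
      fun v => (hF η v).differentiableAt
    rcases le_total (psi p) (psi η) with hle | hle
    · refine antitoneOn_of_deriv_nonpos (convex_Iic (psi η)) hdiff.continuous.continuousOn
        hdiff.differentiableOn ?_ (mem_Iic.2 hle) (mem_Iic.2 le_rfl) hle
      intro v hv
      rw [interior_Iic, mem_Iio] at hv
      obtain ⟨x, hx, rfl⟩ := hpsisurj v
      rw [hderiv x hx]
      exact mul_nonpos_of_nonneg_of_nonpos
        (sub_nonneg.2 ((hpsimono.lt_iff_lt hx hη).1 hv).le) (hphisum _).le
    · refine monotoneOn_of_deriv_nonneg (convex_Ici (psi η)) hdiff.continuous.continuousOn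
        hdiff.differentiableOn ?_ (mem_Ici.2 le_rfl) (mem_Ici.2 hle) hle
      intro v hv
      rw [interior_Ici, mem_Ioi] at hv
      obtain ⟨x, hx, rfl⟩ := hpsisurj v
      rw [hderiv x hx]
      exact mul_nonneg_of_nonpos_of_nonpos
        (sub_nonpos.2 ((hpsimono.lt_iff_lt hη hx).1 hv).le) (hphisum _).le
end

section
/- Let ℓ₁, ℓ₋₁ : [0,1] → [0,∞) be continuous. Then ℓ is classification calibrated at c for every c ∈ (0,1) if and only if ℓ is strictly proper, i.e. for every η ∈ [0,1], η̂ = η is the unique minimiser of η̂ ↦ L(η,η̂) over [0,1]. -/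
/-!
Both directions rest on compactness: for fixed `η` the conditional risk
`p ↦ η * l1 p + (1 - η) * ln1 p` is continuous, so it attains its infimum on `[0,1]` and on the
closed set of predictions lying on the wrong side of `c`.

If `q ≠ η` minimised the risk over `[0,1]`, then at the threshold `c = (q + η) / 2 ∈ (0,1)` the
prediction `q` would be on the wrong side, so the constrained infimum would equal the Bayes risk
and calibration at `c` would fail.  Hence `η` is the only minimiser.  Conversely, the prediction
attaining the constrained infimum differs from `η`, so strict propriety makes its risk strictly
larger than that of `η`.
-/

open Set

/-- A CPE loss with continuous partial losses is classification calibrated at every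
`c ∈ (0,1)` iff it is strictly proper (for every `η ∈ [0,1]`, `η` is the unique
minimiser of `p ↦ L(η,p)` over `[0,1]`). -/
theorem classification_calibrated_everywhere_iff_strictly_proper
    (l1 ln1 : ℝ → ℝ)
    (hl1nn : ∀ x ∈ Icc (0:ℝ) 1, 0 ≤ l1 x)
    (hln1nn : ∀ x ∈ Icc (0:ℝ) 1, 0 ≤ ln1 x)
    (hl1c : ContinuousOn l1 (Icc (0:ℝ) 1))
    (hln1c : ContinuousOn ln1 (Icc (0:ℝ) 1)) :
    (∀ c ∈ Ioo (0:ℝ) 1, ∀ η ∈ Icc (0:ℝ) 1, η ≠ c →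
        sInf ((fun p => η * l1 p + (1 - η) * ln1 p) '' Icc (0:ℝ) 1) <
          sInf ((fun p => η * l1 p + (1 - η) * ln1 p) ''
            {p | p ∈ Icc (0:ℝ) 1 ∧ (p - c) * (η - c) ≤ 0})) ↔
      (∀ η ∈ Icc (0:ℝ) 1, ∀ p ∈ Icc (0:ℝ) 1, p ≠ η →
        η * l1 η + (1 - η) * ln1 η < η * l1 p + (1 - η) * ln1 p) := by
  have hcont : ∀ η : ℝ, ContinuousOn (fun p => η * l1 p + (1 - η) * ln1 p) (Icc (0:ℝ) 1) :=
    fun η => (continuousOn_const.mul hl1c).add (continuousOn_const.mul hln1c)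
  have hbdd : ∀ η : ℝ, BddBelow ((fun p => η * l1 p + (1 - η) * ln1 p) '' Icc (0:ℝ) 1) :=
    fun η => isCompact_Icc.bddBelow_image (hcont η)
  constructor
  · intro h η hη
    have huniq : ∀ q ∈ Icc (0:ℝ) 1,
        (∀ p ∈ Icc (0:ℝ) 1,
          η * l1 q + (1 - η) * ln1 q ≤ η * l1 p + (1 - η) * ln1 p) → q = η := by
      intro q hq hmin
      by_contra hne
      have hc : (q + η) / 2 ∈ Ioo (0:ℝ) 1 := by
        obtain ⟨hq0, hq1⟩ := hq
        obtain ⟨hη0, hη1⟩ := hη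
        rcases lt_or_gt_of_ne hne with hlt | hlt <;> constructor <;> linarith
      have hηc : η ≠ (q + η) / 2 := fun he => hne (by linarith)
      refine absurd (h _ hc η hη hηc) (not_lt.mpr ?_)
      have hwrong : (q - (q + η) / 2) * (η - (q + η) / 2) ≤ 0 := by
        nlinarith [sq_nonneg (q - η)]
      calc sInf ((fun p => η * l1 p + (1 - η) * ln1 p) ''
              {p | p ∈ Icc (0:ℝ) 1 ∧ (p - (q + η) / 2) * (η - (q + η) / 2) ≤ 0})
          ≤ η * l1 q + (1 - η) * ln1 q :=
            csInf_le ((hbdd η).mono (image_mono fun p hp => hp.1)) ⟨q, ⟨hq, hwrong⟩, rfl⟩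
        _ ≤ sInf ((fun p => η * l1 p + (1 - η) * ln1 p) '' Icc (0:ℝ) 1) := by
            refine le_csInf ⟨_, q, hq, rfl⟩ ?_
            rintro _ ⟨p, hp, rfl⟩
            exact hmin p hp
    obtain ⟨q, hq, hqmin⟩ := isCompact_Icc.exists_isMinOn ⟨η, hη⟩ (hcont η)
    have hmin : ∀ p ∈ Icc (0:ℝ) 1,
        η * l1 q + (1 - η) * ln1 q ≤ η * l1 p + (1 - η) * ln1 p := fun p hp => hqmin hp
    have hqη := huniq q hq hmin
    subst hqη
    intro p hp hne
    by_contra! hle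
    exact hne (huniq p hp fun r hr => hle.trans (hmin r hr))
  · intro h c hc η hη hne
    have hcompact : IsCompact {p | p ∈ Icc (0:ℝ) 1 ∧ (p - c) * (η - c) ≤ 0} :=
      isCompact_Icc.inter_right
        (isClosed_le (f := fun p : ℝ => (p - c) * (η - c)) (by fun_prop) continuous_const)
    have hnonempty : {p | p ∈ Icc (0:ℝ) 1 ∧ (p - c) * (η - c) ≤ 0}.Nonempty :=
      ⟨c, ⟨hc.1.le, hc.2.le⟩, by simp⟩
    obtain ⟨p, hp, hpeq, -⟩ := hcompact.exists_sInf_image_eq_and_le hnonempty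
      ((hcont η).mono fun p hp => hp.1)
    rw [hpeq]
    have hpη : p ≠ η := by
      rintro rfl
      have hpos : 0 < (p - c) * (p - c) := mul_self_pos.mpr (sub_ne_zero.mpr hne)
      exact absurd hp.2 (not_le.mpr hpos)
    exact (csInf_le (hbdd η) ⟨η, hη, rfl⟩).trans_lt (h η hη p hp.1 hpη)
end

section
/- Let ℓ be a proper CPE loss with partial losses continuous on [0,1] and continuously differentiable on (0,1), and weight function w(t) = ℓ₋₁′(t)/t on (0,1). Then for c ∈ (0,1), ℓ is classification calibrated at c if and only if ∫_{η}^{c} w(t) dt > 0 for every η ∈ [0,c) and ∫_{c}^{η} w(t) dt > 0 for every η ∈ (c,1] (the integrals being possibly infinite). In particular, if w(c) > 0 then ℓ is classification calibrated at c. -/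
/-!
Write `L η p = η * l1 p + (1 - η) * ln1 p`. Adding the properness inequalities at two points shows
that `ln1` is monotone and `l1` antitone on `[0,1]`, and hence that `L η` decreases on `[0,η]` and
increases on `[η,1]`. So the unconstrained infimum is `L η η`, the infimum over the wrong side of
`c` is `L η c`, and calibration at `c` says exactly that `L η η < L η c` for all `η ≠ c`.

Since `ln1` is monotone and `C¹`, the integral of `w = ln1'/t` over `(a,b)` is positive iff
`ln1 a < ln1 b` (`CPE.lintegral_weight_pos_iff`). It remains to compare the two strictness
conditions. If `L η η = L η c`, then `L η` is constant between `η` and `c`, and properness at the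
midpoint `q` forces `ln1 q = ln1 c`; conversely, if `ln1` takes equal values at two positive points,
then so does `l1`, and the conditional risk cannot separate them. Finally, if `w c > 0` then
`ln1' c ≠ 0`, so `ln1` is not constant on either side of `c`.
-/

open Set MeasureTheory

namespace CPE

/-- Properness of the loss with partial losses `l1` and `ln1`: the conditional risk at `η` is
minimised by the prediction `η`. -/
def Proper (l1 ln1 : ℝ → ℝ) : Prop :=
  ∀ η ∈ Icc (0:ℝ) 1, ∀ p ∈ Icc (0:ℝ) 1,
    η * l1 η + (1 - η) * ln1 η ≤ η * l1 p + (1 - η) * ln1 p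

variable {l1 ln1 : ℝ → ℝ}

lemma Proper.monotoneOn (h : Proper l1 ln1) : MonotoneOn ln1 (Icc 0 1) := by
  intro a ha b hb hab
  rcases hab.eq_or_lt with rfl | hlt
  · exact le_rfl
  have h1 := h a ha b hb
  have h2 := h b hb a ha
  -- Eliminating `l1 b - l1 a` from the two inequalities.
  have h3 : 0 ≤ (b - a) * (ln1 b - ln1 a) := by
    nlinarith [mul_le_mul_of_nonneg_left h1 hb.1, mul_le_mul_of_nonneg_left h2 ha.1]
  have := nonneg_of_mul_nonneg_right h3 (sub_pos.2 hlt)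
  linarith

lemma Proper.antitoneOn (h : Proper l1 ln1) : AntitoneOn l1 (Icc 0 1) := by
  intro a ha b hb hab
  rcases hab.eq_or_lt with rfl | hlt
  · exact le_rfl
  have h1 := h a ha b hb
  have h2 := h b hb a ha
  -- Eliminating `ln1 b - ln1 a` from the two inequalities.
  have h3 : 0 ≤ (b - a) * (l1 a - l1 b) := by
    nlinarith [mul_le_mul_of_nonneg_left h1 (sub_nonneg.2 hb.2),
      mul_le_mul_of_nonneg_left h2 (sub_nonneg.2 ha.2)]
  have := nonneg_of_mul_nonneg_right h3 (sub_pos.2 hlt)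
  linarith

/-- A quantitative comparison of the predictions `q` and `p` at `η`, obtained from properness at
`q`. The third summand is nonnegative when `q` lies between `η` and `p`, by monotonicity of the
partial losses, so the conditional risk grows away from `η`. -/
lemma Proper.risk_compare (h : Proper l1 ln1) {η q p : ℝ} (hq : q ∈ Icc (0:ℝ) 1)
    (hp : p ∈ Icc (0:ℝ) 1) :
    η * l1 q + (1 - η) * ln1 q + (q - η) * ((ln1 p - ln1 q) - (l1 p - l1 q))
      ≤ η * l1 p + (1 - η) * ln1 p := by
  nlinarith [h q hq p hp]

/-- If `0 < a` and `ln1 a = ln1 b`, then `l1 a = l1 b`. -/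
lemma Proper.l1_eq (h : Proper l1 ln1) {a b : ℝ} (ha : a ∈ Icc (0:ℝ) 1) (hb : b ∈ Icc (0:ℝ) 1)
    (ha0 : 0 < a) (hab : a ≤ b) (he : ln1 a = ln1 b) : l1 a = l1 b := by
  have h1 := h a ha b hb
  rw [he] at h1
  exact le_antisymm (le_of_mul_le_mul_left (by linarith) ha0) (h.antitoneOn ha hb hab)

lemma Proper.sInf_risk (h : Proper l1 ln1) {η : ℝ} (hη : η ∈ Icc (0:ℝ) 1) :
    sInf ((fun p => η * l1 p + (1 - η) * ln1 p) '' Icc (0:ℝ) 1)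
      = η * l1 η + (1 - η) * ln1 η := by
  refine IsLeast.csInf_eq ⟨⟨η, hη, rfl⟩, ?_⟩
  rintro _ ⟨p, hp, rfl⟩
  exact h η hη p hp

/-- The infimum of the conditional risk over the predictions on the wrong side of `c` is attained
at `c` itself. -/
lemma Proper.sInf_risk_wrong (h : Proper l1 ln1) {η c : ℝ} (hc : c ∈ Icc (0:ℝ) 1) (hne : η ≠ c) :
    sInf ((fun p => η * l1 p + (1 - η) * ln1 p) ''
        {p | p ∈ Icc (0:ℝ) 1 ∧ (p - c) * (η - c) ≤ 0})
      = η * l1 c + (1 - η) * ln1 c := by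
  refine IsLeast.csInf_eq ⟨⟨c, ⟨hc, by simp⟩, rfl⟩, ?_⟩
  rintro _ ⟨p, ⟨hp, hpc⟩, rfl⟩
  have hr := h.risk_compare (η := η) hc hp
  have hs : 0 ≤ (c - η) * ((ln1 p - ln1 c) - (l1 p - l1 c)) := by
    rcases lt_or_gt_of_ne hne with hlt | hgt
    · have hcp : c ≤ p := by nlinarith
      have h1 := h.monotoneOn hc hp hcp
      have h2 := h.antitoneOn hc hp hcp
      exact mul_nonneg (by linarith) (by linarith)
    · have hcp : p ≤ c := by nlinarith
      have h1 := h.monotoneOn hp hc hcp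
      have h2 := h.antitoneOn hp hc hcp
      exact mul_nonneg_of_nonpos_of_nonpos (by linarith) (by linarith)
  change η * l1 c + (1 - η) * ln1 c ≤ η * l1 p + (1 - η) * ln1 p
  linarith

/-- If `ln1` differs between `c` and the midpoint of `η` and `c`, then the conditional risk at `η`
strictly separates the predictions `η` and `c`. -/
lemma Proper.risk_lt (h : Proper l1 ln1) {η c : ℝ} (hη : η ∈ Icc (0:ℝ) 1)
    (hc : c ∈ Icc (0:ℝ) 1) (hne : η ≠ c) (hq : ln1 ((η + c) / 2) ≠ ln1 c) :
    η * l1 η + (1 - η) * ln1 η < η * l1 c + (1 - η) * ln1 c := by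
  have hqm : (η + c) / 2 ∈ Icc (0:ℝ) 1 :=
    ⟨by linarith [hη.1, hc.1], by linarith [hη.2, hc.2]⟩
  have h1 := h η hη _ hqm
  have h2 := h.risk_compare (η := η) hqm hc
  have hs : 0 < ((η + c) / 2 - η) *
      ((ln1 c - ln1 ((η + c) / 2)) - (l1 c - l1 ((η + c) / 2))) := by
    rcases lt_or_gt_of_ne hne with hlt | hgt
    · have hle : (η + c) / 2 ≤ c := by linarith
      have h3 := lt_of_le_of_ne (h.monotoneOn hqm hc hle) hq
      have h4 := h.antitoneOn hqm hc hle
      exact mul_pos (by linarith) (by linarith)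
    · have hle : c ≤ (η + c) / 2 := by linarith
      have h3 := lt_of_le_of_ne (h.monotoneOn hc hqm hle) hq.symm
      have h4 := h.antitoneOn hc hqm hle
      exact mul_pos_of_neg_of_neg (by linarith) (by linarith)
  linarith

/-- The weight has positive mass on `(a,b)` iff `ln1` strictly increases from `a` to `b`. -/
lemma lintegral_weight_pos_iff {ln1' : ℝ → ℝ} (hm : MonotoneOn ln1 (Icc 0 1))
    (hcont : ContinuousOn ln1 (Icc 0 1)) (hd : ∀ x ∈ Ioo (0:ℝ) 1, HasDerivAt ln1 (ln1' x) x)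
    (hc' : ContinuousOn ln1' (Ioo 0 1)) {a b : ℝ} (ha : 0 ≤ a) (hab : a < b) (hb : b ≤ 1) :
    (0 < ∫⁻ t in Ioo a b, ENNReal.ofReal (ln1' t / t)) ↔ ln1 a ≠ ln1 b := by
  have hsub : Ioo a b ⊆ Ioo (0:ℝ) 1 := Ioo_subset_Ioo ha hb
  have hsub' : Icc a b ⊆ Icc (0:ℝ) 1 := Icc_subset_Icc ha hb
  have hw : ContinuousOn (fun t => ENNReal.ofReal (ln1' t / t)) (Ioo a b) :=
    ENNReal.continuous_ofReal.comp_continuousOn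
      ((hc'.mono hsub).div continuousOn_id fun x hx => (hsub hx).1.ne')
  rw [pos_iff_ne_zero, not_iff_not]
  constructor
  · intro h0
    rw [lintegral_eq_zero_iff' (hw.aemeasurable measurableSet_Ioo)] at h0
    have hz : EqOn (fun t => ENNReal.ofReal (ln1' t / t)) (fun _ => 0) (Ioo a b) :=
      Measure.eqOn_open_of_ae_eq h0 isOpen_Ioo hw continuousOn_const
    have hanti : AntitoneOn ln1 (Icc a b) := by
      refine antitoneOn_of_deriv_nonpos (convex_Icc a b) (hcont.mono hsub') ?_ ?_
      · rw [interior_Icc]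
        exact fun x hx => (hd x (hsub hx)).differentiableAt.differentiableWithinAt
      · rw [interior_Icc]
        intro x hx
        rw [(hd x (hsub hx)).deriv]
        have hx0 : ln1' x / x ≤ 0 := ENNReal.ofReal_eq_zero.1 (hz hx)
        have := (div_le_iff₀ (hsub hx).1).1 hx0
        linarith
    have hal : a ∈ Icc a b := left_mem_Icc.2 hab.le
    have hbr : b ∈ Icc a b := right_mem_Icc.2 hab.le
    exact le_antisymm (hm (hsub' hal) (hsub' hbr) hab.le) (hanti hal hbr hab.le)
  · intro he
    rw [setLIntegral_congr_fun (g := fun _ => 0) measurableSet_Ioo, lintegral_zero]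
    intro x hx
    have hconst : ln1 =ᶠ[nhds x] fun _ => ln1 a := by
      filter_upwards [isOpen_Ioo.mem_nhds hx] with y hy
      have hy' : y ∈ Icc (0:ℝ) 1 := hsub' (Ioo_subset_Icc_self hy)
      have h1 := hm (hsub' (left_mem_Icc.2 hab.le)) hy' hy.1.le
      have h2 := hm hy' (hsub' (right_mem_Icc.2 hab.le)) hy.2.le
      linarith
    have : ln1' x = 0 :=
      (hd x (hsub hx)).unique ((hasDerivAt_const x (ln1 a)).congr_of_eventuallyEq hconst)
    simp [this]

end CPE

/-- A proper CPE loss (partial losses continuous on `[0,1]`, continuously differentiable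
on `(0,1)`, weight function `w(t) = ln1'(t)/t`) is classification calibrated at
`c ∈ (0,1)` iff `∫_η^c w > 0` for every `η ∈ [0,c)` and `∫_c^η w > 0` for every
`η ∈ (c,1]` (integrals possibly infinite, taken as Lebesgue integrals).
In particular, if `w(c) > 0` then the loss is classification calibrated at `c`. -/
theorem classification_calibrated_iff_weight_positive_integrals
    (l1 ln1 l1' ln1' : ℝ → ℝ) (c : ℝ) (hc : c ∈ Ioo (0:ℝ) 1)
    (hl1nn : ∀ x ∈ Icc (0:ℝ) 1, 0 ≤ l1 x)
    (hln1nn : ∀ x ∈ Icc (0:ℝ) 1, 0 ≤ ln1 x)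
    (hl1c : ContinuousOn l1 (Icc (0:ℝ) 1))
    (hln1c : ContinuousOn ln1 (Icc (0:ℝ) 1))
    (hl1d : ∀ x ∈ Ioo (0:ℝ) 1, HasDerivAt l1 (l1' x) x)
    (hln1d : ∀ x ∈ Ioo (0:ℝ) 1, HasDerivAt ln1 (ln1' x) x)
    (hl1'c : ContinuousOn l1' (Ioo (0:ℝ) 1))
    (hln1'c : ContinuousOn ln1' (Ioo (0:ℝ) 1))
    (hproper : ∀ η ∈ Icc (0:ℝ) 1, ∀ p ∈ Icc (0:ℝ) 1,
      η * l1 η + (1 - η) * ln1 η ≤ η * l1 p + (1 - η) * ln1 p) :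
    ((∀ η ∈ Icc (0:ℝ) 1, η ≠ c →
        sInf ((fun p => η * l1 p + (1 - η) * ln1 p) '' Icc (0:ℝ) 1) <
          sInf ((fun p => η * l1 p + (1 - η) * ln1 p) ''
            {p | p ∈ Icc (0:ℝ) 1 ∧ (p - c) * (η - c) ≤ 0})) ↔
      ((∀ η ∈ Ico (0:ℝ) c, 0 < ∫⁻ t in Ioo η c, ENNReal.ofReal (ln1' t / t)) ∧
       (∀ η ∈ Ioc c 1, 0 < ∫⁻ t in Ioo c η, ENNReal.ofReal (ln1' t / t)))) ∧
    (0 < ln1' c / c →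
      ∀ η ∈ Icc (0:ℝ) 1, η ≠ c →
        sInf ((fun p => η * l1 p + (1 - η) * ln1 p) '' Icc (0:ℝ) 1) <
          sInf ((fun p => η * l1 p + (1 - η) * ln1 p) ''
            {p | p ∈ Icc (0:ℝ) 1 ∧ (p - c) * (η - c) ≤ 0})) := by
  have h : CPE.Proper l1 ln1 := hproper
  have hcI : c ∈ Icc (0:ℝ) 1 := Ioo_subset_Icc_self hc
  -- Calibration at `c` means that `ln1` takes the value `ln1 c` only at `c`.
  have hcc : (∀ η ∈ Icc (0:ℝ) 1, η ≠ c →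
        sInf ((fun p => η * l1 p + (1 - η) * ln1 p) '' Icc (0:ℝ) 1) <
          sInf ((fun p => η * l1 p + (1 - η) * ln1 p) ''
            {p | p ∈ Icc (0:ℝ) 1 ∧ (p - c) * (η - c) ≤ 0})) ↔
      ∀ η ∈ Icc (0:ℝ) 1, η ≠ c → ln1 η ≠ ln1 c := by
    constructor
    · intro H η hη hne he
      rcases lt_or_gt_of_ne hne with hlt | hgt
      · -- `η` may be `0`, where `ln1 η = ln1 c` does not control `l1 η`; the midpoint is positive.
        have hq : (η + c) / 2 ∈ Icc (0:ℝ) 1 :=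
          ⟨by linarith [hη.1, hc.1], by linarith [hη.2, hc.2]⟩
        have hqc : (η + c) / 2 < c := by linarith
        have heq : ln1 ((η + c) / 2) = ln1 c :=
          le_antisymm (h.monotoneOn hq hcI hqc.le)
            (he ▸ h.monotoneOn hη hq (by linarith))
        have hl := h.l1_eq hq hcI (by linarith [hη.1, hc.1]) hqc.le heq
        have := H _ hq hqc.ne
        rw [h.sInf_risk hq, h.sInf_risk_wrong hcI hqc.ne, hl, heq] at this
        exact lt_irrefl _ this
      · have hl := h.l1_eq hcI hη hc.1 hgt.le he.symm
        have := H _ hη hne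
        rw [h.sInf_risk hη, h.sInf_risk_wrong hcI hne, hl, he] at this
        exact lt_irrefl _ this
    · intro H η hη hne
      rw [h.sInf_risk hη, h.sInf_risk_wrong hcI hne]
      refine h.risk_lt hη hcI hne (H _ ?_ ?_)
      · exact ⟨by linarith [hη.1, hc.1], by linarith [hη.2, hc.2]⟩
      · intro hq
        exact hne (by linarith)
  have hint {a b : ℝ} (ha : 0 ≤ a) (hab : a < b) (hb : b ≤ 1) :=
    CPE.lintegral_weight_pos_iff h.monotoneOn hln1c hln1d hln1'c ha hab hb
  rw [hcc]
  refine ⟨⟨fun H => ⟨fun η hη => ?_, fun η hη => ?_⟩, ?_⟩, ?_⟩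
  · exact (hint hη.1 hη.2 hc.2.le).2 (H η ⟨hη.1, by linarith [hη.2, hc.2]⟩ hη.2.ne)
  · exact (hint hc.1.le hη.1 hη.2).2 (H η ⟨by linarith [hη.1, hc.1], hη.2⟩ hη.1.ne').symm
  · rintro ⟨H1, H2⟩ η hη hne
    rcases lt_or_gt_of_ne hne with hlt | hgt
    · exact (hint hη.1 hlt hc.2.le).1 (H1 η ⟨hη.1, hlt⟩)
    · exact ((hint hc.1.le hgt hη.2).1 (H2 η ⟨hgt, hη.2⟩)).symm
  · intro hw
    have hne' : ln1' c ≠ 0 := fun h0 => by simp [h0] at hw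
    -- A nonzero derivative at `c` makes `ln1` avoid the value `ln1 c` in a punctured neighbourhood.
    have hev := (hln1d c hc).eventually_ne (c := ln1 c) hne'
    intro η hη hne he
    rcases lt_or_gt_of_ne hne with hlt | hgt
    · have hev' := hev.filter_mono (nhdsWithin_mono c fun x (hx : x ∈ Iio c) => hx.ne)
      obtain ⟨x, hx, hx1⟩ := (hev'.and (Ioo_mem_nhdsLT hlt)).exists
      have hxI : x ∈ Icc (0:ℝ) 1 := ⟨by linarith [hη.1, hx1.1], by linarith [hc.2, hx1.2]⟩
      exact hx (le_antisymm (h.monotoneOn hxI hcI hx1.2.le)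
        (he ▸ h.monotoneOn hη hxI hx1.1.le))
    · have hev' := hev.filter_mono (nhdsWithin_mono c fun x (hx : x ∈ Ioi c) => ne_of_gt hx)
      obtain ⟨x, hx, hx1⟩ := (hev'.and (Ioo_mem_nhdsGT hgt)).exists
      have hxI : x ∈ Icc (0:ℝ) 1 := ⟨by linarith [hc.1, hx1.1], by linarith [hη.2, hx1.2]⟩
      exact hx (le_antisymm (he ▸ h.monotoneOn hxI hη hx1.2.le)
        (h.monotoneOn hcI hxI hx1.1.le))
end

section
/- Let ℓ be a proper CPE loss with partial losses differentiable on (0,1), and let ψ : (0,1) → ℝ be differentiable with ψ′ > 0, V = ψ((0,1)). Then for every η ∈ [0,1] the composite conditional risk v ↦ L^ψ(η,v) := η·ℓ₁(ψ⁻¹(v)) + (1−η)·ℓ₋₁(ψ⁻¹(v)) is quasi-convex on V: for every a ∈ ℝ the sublevel set { v ∈ V : L^ψ(η,v) ≤ a } is convex (an interval). -/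
/-!
Properness at two reports `p < r` forces `l1 r - l1 p ≤ ln1 r - ln1 p`, because the affine function
`η ↦ L(η, r) - L(η, p)` is nonnegative at `p` and nonpositive at `r`, hence antitone. So
`L(η, ·)` decreases before `η` and increases after it (`risk_le_of_le_right`,
`risk_le_of_le_left`), and its value at a point between `x` and `y` is at most the larger of the
two end values. The link is continuous and strictly increasing, so its range is an interval and it
transports this betweenness to `V`.
-/

open Set

/-- To the right of the true probability `η`, moving the report further away does not lower the
risk. -/
lemma risk_le_of_le_left {l1 ln1 : ℝ → ℝ}
    (hproper : ∀ η ∈ Icc (0:ℝ) 1, ∀ p ∈ Icc (0:ℝ) 1,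
      η * l1 η + (1 - η) * ln1 η ≤ η * l1 p + (1 - η) * ln1 p)
    {η p r : ℝ} (hp : p ∈ Icc (0:ℝ) 1) (hr : r ∈ Icc (0:ℝ) 1) (hηp : η ≤ p) (hpr : p ≤ r) :
    η * l1 p + (1 - η) * ln1 p ≤ η * l1 r + (1 - η) * ln1 r := by
  rcases hpr.eq_or_lt with rfl | hlt
  · exact le_rfl
  have h1 := hproper p hp r hr
  have h2 := hproper r hr p hp
  have hD : 0 ≤ (ln1 r - ln1 p) - (l1 r - l1 p) := by
    by_contra! h
    nlinarith [mul_neg_of_pos_of_neg (sub_pos.2 hlt) h]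
  nlinarith [mul_nonneg (sub_nonneg.2 hηp) hD]

/-- To the left of the true probability `η`, moving the report further away does not lower the
risk. -/
lemma risk_le_of_le_right {l1 ln1 : ℝ → ℝ}
    (hproper : ∀ η ∈ Icc (0:ℝ) 1, ∀ p ∈ Icc (0:ℝ) 1,
      η * l1 η + (1 - η) * ln1 η ≤ η * l1 p + (1 - η) * ln1 p)
    {η p r : ℝ} (hp : p ∈ Icc (0:ℝ) 1) (hr : r ∈ Icc (0:ℝ) 1) (hpr : p ≤ r) (hrη : r ≤ η) :
    η * l1 r + (1 - η) * ln1 r ≤ η * l1 p + (1 - η) * ln1 p := by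
  rcases hpr.eq_or_lt with rfl | hlt
  · exact le_rfl
  have h1 := hproper p hp r hr
  have h2 := hproper r hr p hp
  have hD : 0 ≤ (ln1 r - ln1 p) - (l1 r - l1 p) := by
    by_contra! h
    nlinarith [mul_neg_of_pos_of_neg (sub_pos.2 hlt) h]
  nlinarith [mul_nonneg (sub_nonneg.2 hrη) hD]

/-- For a proper CPE loss with partial losses differentiable on `(0,1)` and a
differentiable link `psi` with `psi' > 0` on `(0,1)` (with inverse `q` on
`V = psi '' (0,1)`), the composite conditional risk `v ↦ L(η, q v)` is quasi-convex on
`V`: all its sublevel sets are convex. -/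
theorem composite_conditional_risk_quasiconvex
    (l1 ln1 l1' ln1' psi psi' q : ℝ → ℝ)
    (hl1nn : ∀ x ∈ Icc (0:ℝ) 1, 0 ≤ l1 x)
    (hln1nn : ∀ x ∈ Icc (0:ℝ) 1, 0 ≤ ln1 x)
    (hl1d : ∀ x ∈ Ioo (0:ℝ) 1, HasDerivAt l1 (l1' x) x)
    (hln1d : ∀ x ∈ Ioo (0:ℝ) 1, HasDerivAt ln1 (ln1' x) x)
    (hproper : ∀ η ∈ Icc (0:ℝ) 1, ∀ p ∈ Icc (0:ℝ) 1,
      η * l1 η + (1 - η) * ln1 η ≤ η * l1 p + (1 - η) * ln1 p)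
    (hpsid : ∀ x ∈ Ioo (0:ℝ) 1, HasDerivAt psi (psi' x) x)
    (hpsi'pos : ∀ x ∈ Ioo (0:ℝ) 1, 0 < psi' x)
    (hq : ∀ x ∈ Ioo (0:ℝ) 1, q (psi x) = x) :
    ∀ η ∈ Icc (0:ℝ) 1, ∀ a : ℝ,
      Convex ℝ {v ∈ psi '' Ioo (0:ℝ) 1 | η * l1 (q v) + (1 - η) * ln1 (q v) ≤ a} := by
  intro η _ a
  have hcont : ContinuousOn psi (Ioo 0 1) :=
    fun x hx => (hpsid x hx).continuousAt.continuousWithinAt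
  have hmono : StrictMonoOn psi (Ioo 0 1) := by
    refine strictMonoOn_of_deriv_pos (convex_Ioo 0 1) hcont fun x hx => ?_
    rw [interior_Ioo] at hx
    rw [(hpsid x hx).deriv]
    exact hpsi'pos x hx
  have hV : OrdConnected (psi '' Ioo (0:ℝ) 1) :=
    (isPreconnected_Ioo.image psi hcont).ordConnected
  refine OrdConnected.convex ⟨?_⟩
  rintro _ ⟨⟨x, hx, rfl⟩, hxa⟩ _ ⟨⟨y, hy, rfl⟩, hya⟩ u hu
  obtain ⟨z, hz, rfl⟩ := hV.out (mem_image_of_mem psi hx) (mem_image_of_mem psi hy) hu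
  refine ⟨mem_image_of_mem psi hz, ?_⟩
  have hxz : x ≤ z := (hmono.le_iff_le hx hz).1 hu.1
  have hzy : z ≤ y := (hmono.le_iff_le hz hy).1 hu.2
  rw [hq x hx] at hxa
  rw [hq y hy] at hya
  rw [hq z hz]
  rcases le_total η z with h | h
  · exact (risk_le_of_le_left hproper (Ioo_subset_Icc_self hz) (Ioo_subset_Icc_self hy) h
      hzy).trans hya
  · exact (risk_le_of_le_right hproper (Ioo_subset_Icc_self hx) (Ioo_subset_Icc_self hz) hxz
      h).trans hxa
end

section
/- Let w : (0,1) → (0,∞) be differentiable and ψ : (0,1) → ℝ twice differentiable with ψ′ > 0, with inverse q = ψ⁻¹ on V = ψ((0,1)). Let ℓ be a proper CPE loss with weight w, i.e. with partial losses differentiable on (0,1) satisfying ℓ₋₁′(x) = x·w(x) and ℓ₁′(x) = −(1−x)·w(x). Then both composite partial losses v ↦ ℓ₁(q(v)) and v ↦ ℓ₋₁(q(v)) are convex on V if and only if −1/x ≤ w′(x)/w(x) − ψ″(x)/ψ′(x) ≤ 1/(1−x) for all x ∈ (0,1). -/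
/-!
With `V = psi '' (0,1)`, a function `g ∘ q` whose outer part has derivative `a` on `(0,1)` has
derivative `(a / psi') ∘ q` on the open interval `V`. It is convex iff this derivative is monotone,
and, `psi` being an increasing bijection onto `V`, iff `a / psi'` is monotone on `(0,1)`, that is iff
`0 ≤ a' * psi' - a * psi''` there (`convexOn_comp_inverse_iff`). Taking `a x = -(1 - x) * w x`
and `a x = x * w x` and dividing by `w * psi' > 0` gives the upper and the lower bound respectively.
-/

open Set

/-- A differentiable function on `(0,1)` is monotone iff its derivative is nonnegative. -/
lemma monotoneOn_Ioo_iff_deriv_nonneg {h h' : ℝ → ℝ}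
    (hd : ∀ x ∈ Ioo (0:ℝ) 1, HasDerivAt h (h' x) x) :
    MonotoneOn h (Ioo (0:ℝ) 1) ↔ ∀ x ∈ Ioo (0:ℝ) 1, 0 ≤ h' x := by
  constructor
  · intro hm x hx
    have := hm.derivWithin_nonneg (x := x)
    rwa [derivWithin_of_isOpen isOpen_Ioo hx, (hd x hx).deriv] at this
  · intro hn
    refine monotoneOn_of_deriv_nonneg (convex_Ioo 0 1)
      (fun x hx => (hd x hx).continuousAt.continuousWithinAt) ?_ ?_
    · intro x hx
      rw [interior_Ioo] at hx
      exact (hd x hx).differentiableAt.differentiableWithinAt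
    · intro x hx
      rw [interior_Ioo] at hx
      rw [(hd x hx).deriv]
      exact hn x hx

/-- Second-order convexity criterion for `g ∘ q`, expressed in the coordinate `x = q v`. -/
lemma convexOn_comp_inverse_iff (psi psi' psi'' q g a a' : ℝ → ℝ)
    (hpsid : ∀ x ∈ Ioo (0:ℝ) 1, HasDerivAt psi (psi' x) x)
    (hpsid2 : ∀ x ∈ Ioo (0:ℝ) 1, HasDerivAt psi' (psi'' x) x)
    (hpsi'pos : ∀ x ∈ Ioo (0:ℝ) 1, 0 < psi' x)
    (hq : ∀ x ∈ Ioo (0:ℝ) 1, q (psi x) = x)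
    (hg : ∀ x ∈ Ioo (0:ℝ) 1, HasDerivAt g (a x) x)
    (ha : ∀ x ∈ Ioo (0:ℝ) 1, HasDerivAt a (a' x) x) :
    ConvexOn ℝ (psi '' Ioo (0:ℝ) 1) (fun v => g (q v)) ↔
      ∀ x ∈ Ioo (0:ℝ) 1, 0 ≤ a' x * psi' x - a x * psi'' x := by
  have hcont : ContinuousOn psi (Ioo (0:ℝ) 1) :=
    fun x hx => (hpsid x hx).continuousAt.continuousWithinAt
  have hmono : StrictMonoOn psi (Ioo (0:ℝ) 1) := by
    refine strictMonoOn_of_deriv_pos (convex_Ioo 0 1) hcont ?_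
    intro x hx
    rw [interior_Ioo] at hx
    rw [(hpsid x hx).deriv]
    exact hpsi'pos x hx
  have hconv : Convex ℝ (psi '' Ioo (0:ℝ) 1) :=
    (isPreconnected_Ioo.image psi hcont).ordConnected.convex
  -- `psi` is strictly differentiable since `psi'` is continuous, hence it is an open map.
  have hstrict : ∀ x ∈ Ioo (0:ℝ) 1, HasStrictDerivAt psi (psi' x) x := by
    intro x hx
    refine hasStrictDerivAt_of_hasDerivAt_of_continuousAt ?_ (hpsid2 x hx).continuousAt
    filter_upwards [isOpen_Ioo.mem_nhds hx] with y hy using hpsid y hy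
  have hopen : IsOpen (psi '' Ioo (0:ℝ) 1) := by
    rw [isOpen_iff_mem_nhds]
    rintro _ ⟨x, hx, rfl⟩
    rw [← (hstrict x hx).map_nhds_eq (hpsi'pos x hx).ne']
    exact Filter.image_mem_map (isOpen_Ioo.mem_nhds hx)
  have hqimg : q '' (psi '' Ioo (0:ℝ) 1) = Ioo (0:ℝ) 1 := by
    ext y
    constructor
    · rintro ⟨_, ⟨x, hx, rfl⟩, rfl⟩
      rwa [hq x hx]
    · intro hy
      exact ⟨psi y, ⟨y, hy, rfl⟩, hq y hy⟩
  have hqmono : StrictMonoOn q (psi '' Ioo (0:ℝ) 1) := by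
    rintro _ ⟨x, hx, rfl⟩ _ ⟨y, hy, rfl⟩ hxy
    rw [hq x hx, hq y hy]
    exact (hmono.lt_iff_lt hx hy).1 hxy
  have hqd : ∀ x ∈ Ioo (0:ℝ) 1, HasDerivAt q (psi' x)⁻¹ (psi x) := by
    intro x hx
    have hVn := hopen.mem_nhds (mem_image_of_mem psi hx)
    have hqc : ContinuousAt q (psi x) := by
      refine hqmono.continuousAt_of_image_mem_nhds hVn ?_
      rw [hqimg, hq x hx]
      exact isOpen_Ioo.mem_nhds hx
    refine HasDerivAt.of_local_left_inverse hqc (by rw [hq x hx]; exact hpsid x hx)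
      (hpsi'pos x hx).ne' ?_
    filter_upwards [hVn]
    rintro _ ⟨y, hy, rfl⟩
    rw [hq y hy]
  have hFd : ∀ x ∈ Ioo (0:ℝ) 1,
      HasDerivAt (fun v => g (q v)) (a x / psi' x) (psi x) := by
    intro x hx
    have h1 : HasDerivAt g (a x) (q (psi x)) := by rw [hq x hx]; exact hg x hx
    exact h1.comp (psi x) (hqd x hx)
  have hFdiff : ∀ v ∈ psi '' Ioo (0:ℝ) 1, DifferentiableAt ℝ (fun v => g (q v)) v := by
    rintro _ ⟨x, hx, rfl⟩
    exact (hFd x hx).differentiableAt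
  have hquot : ∀ x ∈ Ioo (0:ℝ) 1, HasDerivAt (fun x => a x / psi' x)
      ((a' x * psi' x - a x * psi'' x) / psi' x ^ 2) x :=
    fun x hx => (ha x hx).div (hpsid2 x hx) (hpsi'pos x hx).ne'
  have hconvmono : ConvexOn ℝ (psi '' Ioo (0:ℝ) 1) (fun v => g (q v)) ↔
      MonotoneOn (fun x => a x / psi' x) (Ioo (0:ℝ) 1) := by
    constructor
    · intro hc x hx y hy hxy
      have := hc.monotoneOn_deriv hFdiff (mem_image_of_mem psi hx) (mem_image_of_mem psi hy)
        (hmono.monotoneOn hx hy hxy)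
      rwa [(hFd x hx).deriv, (hFd y hy).deriv] at this
    · intro hm
      refine MonotoneOn.convexOn_of_deriv hconv
        (fun v hv => (hFdiff v hv).continuousAt.continuousWithinAt)
        (fun v hv => (hFdiff v (interior_subset hv)).differentiableWithinAt) ?_
      rw [hopen.interior_eq]
      rintro _ ⟨x, hx, rfl⟩ _ ⟨y, hy, rfl⟩ hxy
      rw [(hFd x hx).deriv, (hFd y hy).deriv]
      exact hm hx hy ((hmono.le_iff_le hx hy).1 hxy)
  rw [hconvmono, monotoneOn_Ioo_iff_deriv_nonneg hquot]
  refine forall₂_congr fun x hx => ?_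
  have hp : 0 < psi' x ^ 2 := pow_pos (hpsi'pos x hx) 2
  rw [le_div_iff₀ hp, zero_mul]

/-- Characterisation of convexity of composite losses: for a strictly proper loss with
differentiable weight `w > 0` (so `ln1'(x) = x·w(x)`, `l1'(x) = -(1-x)·w(x)`) and a twice
differentiable link `psi` with `psi' > 0` and inverse `q`, both composite partial losses
`v ↦ l1(q v)` and `v ↦ ln1(q v)` are convex on `psi '' (0,1)` iff
`-1/x ≤ w'(x)/w(x) - psi''(x)/psi'(x) ≤ 1/(1-x)` for all `x ∈ (0,1)`. -/
theorem composite_loss_convex_iff_weight_link_inequality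
    (w w' psi psi' psi'' q l1 ln1 : ℝ → ℝ)
    (hwpos : ∀ x ∈ Ioo (0:ℝ) 1, 0 < w x)
    (hwd : ∀ x ∈ Ioo (0:ℝ) 1, HasDerivAt w (w' x) x)
    (hpsid : ∀ x ∈ Ioo (0:ℝ) 1, HasDerivAt psi (psi' x) x)
    (hpsid2 : ∀ x ∈ Ioo (0:ℝ) 1, HasDerivAt psi' (psi'' x) x)
    (hpsi'pos : ∀ x ∈ Ioo (0:ℝ) 1, 0 < psi' x)
    (hq : ∀ x ∈ Ioo (0:ℝ) 1, q (psi x) = x)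
    (hl1d : ∀ x ∈ Ioo (0:ℝ) 1, HasDerivAt l1 (-(1 - x) * w x) x)
    (hln1d : ∀ x ∈ Ioo (0:ℝ) 1, HasDerivAt ln1 (x * w x) x) :
    (ConvexOn ℝ (psi '' Ioo (0:ℝ) 1) (fun v => l1 (q v)) ∧
      ConvexOn ℝ (psi '' Ioo (0:ℝ) 1) (fun v => ln1 (q v))) ↔
      (∀ x ∈ Ioo (0:ℝ) 1,
        -(1/x) ≤ w' x / w x - psi'' x / psi' x ∧
          w' x / w x - psi'' x / psi' x ≤ 1/(1-x)) := by
  rw [convexOn_comp_inverse_iff psi psi' psi'' q l1 (fun x => -(1 - x) * w x)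
      (fun x => w x - (1 - x) * w' x) hpsid hpsid2 hpsi'pos hq hl1d ?_,
    convexOn_comp_inverse_iff psi psi' psi'' q ln1 (fun x => x * w x)
      (fun x => w x + x * w' x) hpsid hpsid2 hpsi'pos hq hln1d ?_,
    ← forall₂_and]
  · refine forall₂_congr fun x hx => ?_
    have hw := hwpos x hx
    have hp := hpsi'pos x hx
    have hx0 : 0 < x := hx.1
    have hx1 : 0 < 1 - x := sub_pos.2 hx.2
    have e1 : (w x - (1 - x) * w' x) * psi' x - -(1 - x) * w x * psi'' x =
        (1 / (1 - x) - (w' x / w x - psi'' x / psi' x)) * ((1 - x) * (w x * psi' x)) := by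
      field_simp
      ring
    have e2 : (w x + x * w' x) * psi' x - x * w x * psi'' x =
        (w' x / w x - psi'' x / psi' x - -(1 / x)) * (x * (w x * psi' x)) := by
      field_simp
      ring
    rw [e1, e2, mul_nonneg_iff_of_pos_right (by positivity),
      mul_nonneg_iff_of_pos_right (by positivity), sub_nonneg, sub_nonneg, and_comm]
  · intro x hx
    exact ((hasDerivAt_id' x).mul (hwd x hx)).congr_deriv (by ring)
  · intro x hx
    exact ((((hasDerivAt_id' x).const_sub 1).neg).mul (hwd x hx)).congr_deriv (by simp; ring)
end

section
/- (Canonical link) Let w : (0,1) → (0,∞) be differentiable, let ℓ be a proper CPE loss with weight w (partial losses differentiable on (0,1) with ℓ₋₁′(x) = x·w(x) and ℓ₁′(x) = −(1−x)·w(x)), and let ψ : (0,1) → ℝ be any function with ψ′ = w (the canonical link). Then both composite partial losses v ↦ ℓ₁(ψ⁻¹(v)) and v ↦ ℓ₋₁(ψ⁻¹(v)) are convex on ψ((0,1)). -/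
/-!
Both partial losses satisfy `l'(x) = (x - c) * w x`, with `c = 1` for `l1` and `c = 0` for `ln1`.
Since `psi' = w`, the function `t ↦ l t - (x - c) * psi t` has derivative `(t - x) * w t`, so it is
minimal at `t = x`. In the coordinate `v = psi t` this says that the composite loss lies above its
tangent line of slope `x - c` at `psi x` (`tangent_line_le`). A function with a supporting line at
every point of an interval is convex (`convexOn_comp_canonical_link`), so no derivative of the
inverse link is needed.
-/

open Set

/-- The supporting line of slope `x - c` at `psi x` for the composite loss, written in the
coordinate on `(0,1)`. -/
lemma tangent_line_le {w psi l : ℝ → ℝ} {c : ℝ}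
    (hwpos : ∀ x ∈ Ioo (0:ℝ) 1, 0 < w x)
    (hpsid : ∀ x ∈ Ioo (0:ℝ) 1, HasDerivAt psi (w x) x)
    (hl : ∀ x ∈ Ioo (0:ℝ) 1, HasDerivAt l ((x - c) * w x) x)
    {x z : ℝ} (hx : x ∈ Ioo (0:ℝ) 1) (hz : z ∈ Ioo (0:ℝ) 1) :
    l x + (x - c) * (psi z - psi x) ≤ l z := by
  have hg : ∀ t ∈ Ioo (0:ℝ) 1,
      HasDerivAt (fun t => l t - (x - c) * psi t) ((t - x) * w t) t := by
    intro t ht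
    exact ((hl t ht).sub ((hpsid t ht).const_mul (x - c))).congr_deriv (by ring)
  rcases lt_trichotomy x z with h | h | h
  · have hsub : Icc x z ⊆ Ioo (0:ℝ) 1 := fun t ht => ⟨hx.1.trans_le ht.1, ht.2.trans_lt hz.2⟩
    obtain ⟨t, ht, he⟩ := exists_hasDerivAt_eq_slope _ _ h
      (fun t ht => (hg t (hsub ht)).continuousAt.continuousWithinAt)
      (fun t ht => hg t (hsub (Ioo_subset_Icc_self ht)))
    rw [eq_div_iff (sub_pos.2 h).ne'] at he
    have hpos : 0 ≤ (t - x) * w t * (z - x) :=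
      mul_nonneg (mul_nonneg (sub_pos.2 ht.1).le (hwpos t (hsub (Ioo_subset_Icc_self ht))).le)
        (sub_pos.2 h).le
    linarith
  · subst h
    simp
  · have hsub : Icc z x ⊆ Ioo (0:ℝ) 1 := fun t ht => ⟨hz.1.trans_le ht.1, ht.2.trans_lt hx.2⟩
    obtain ⟨t, ht, he⟩ := exists_hasDerivAt_eq_slope _ _ h
      (fun t ht => (hg t (hsub ht)).continuousAt.continuousWithinAt)
      (fun t ht => hg t (hsub (Ioo_subset_Icc_self ht)))
    rw [eq_div_iff (sub_pos.2 h).ne'] at he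
    have hneg : (t - x) * w t * (x - z) ≤ 0 :=
      mul_nonpos_of_nonpos_of_nonneg
        (mul_nonpos_of_nonpos_of_nonneg (sub_neg.2 ht.2).le
          (hwpos t (hsub (Ioo_subset_Icc_self ht))).le)
        (sub_pos.2 h).le
    linarith

lemma convexOn_comp_canonical_link {w psi q l : ℝ → ℝ} {c : ℝ}
    (hwpos : ∀ x ∈ Ioo (0:ℝ) 1, 0 < w x)
    (hpsid : ∀ x ∈ Ioo (0:ℝ) 1, HasDerivAt psi (w x) x)
    (hq : ∀ x ∈ Ioo (0:ℝ) 1, q (psi x) = x)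
    (hl : ∀ x ∈ Ioo (0:ℝ) 1, HasDerivAt l ((x - c) * w x) x) :
    ConvexOn ℝ (psi '' Ioo (0:ℝ) 1) (fun v => l (q v)) := by
  have hconv : Convex ℝ (psi '' Ioo (0:ℝ) 1) :=
    (isPreconnected_Ioo.image psi
      fun x hx => (hpsid x hx).continuousAt.continuousWithinAt).ordConnected.convex
  refine ⟨hconv, ?_⟩
  rintro _ ⟨x, hx, rfl⟩ _ ⟨y, hy, rfl⟩ a b ha hb hab
  obtain ⟨z, hz, hze⟩ := hconv (mem_image_of_mem psi hx) (mem_image_of_mem psi hy) ha hb hab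
  simp only [← hze, hq x hx, hq y hy, hq z hz]
  simp only [smul_eq_mul] at hze ⊢
  -- Average the supporting line at `psi z`, evaluated at `psi x` and `psi y`.
  have h1 := mul_le_mul_of_nonneg_left (tangent_line_le hwpos hpsid hl hz hx) ha
  have h2 := mul_le_mul_of_nonneg_left (tangent_line_le hwpos hpsid hl hz hy) hb
  have h3 : a * (l z + (z - c) * (psi x - psi z)) + b * (l z + (z - c) * (psi y - psi z))
      = l z := by
    linear_combination (l z - (z - c) * psi z) * hab - (z - c) * hze
  linarith

/-- (Canonical link) A proper loss with differentiable weight `w > 0` composed with its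
canonical link `psi` (any link with `psi' = w`) is always convex: both composite partial
losses `v ↦ l1(psi⁻¹ v)` and `v ↦ ln1(psi⁻¹ v)` are convex on `psi '' (0,1)`. -/
theorem canonical_link_composite_loss_convex
    (w w' psi q l1 ln1 : ℝ → ℝ)
    (hwpos : ∀ x ∈ Ioo (0:ℝ) 1, 0 < w x)
    (hwd : ∀ x ∈ Ioo (0:ℝ) 1, HasDerivAt w (w' x) x)
    (hpsid : ∀ x ∈ Ioo (0:ℝ) 1, HasDerivAt psi (w x) x)
    (hq : ∀ x ∈ Ioo (0:ℝ) 1, q (psi x) = x)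
    (hl1d : ∀ x ∈ Ioo (0:ℝ) 1, HasDerivAt l1 (-(1 - x) * w x) x)
    (hln1d : ∀ x ∈ Ioo (0:ℝ) 1, HasDerivAt ln1 (x * w x) x) :
    ConvexOn ℝ (psi '' Ioo (0:ℝ) 1) (fun v => l1 (q v)) ∧
      ConvexOn ℝ (psi '' Ioo (0:ℝ) 1) (fun v => ln1 (q v)) := by
  constructor
  · refine convexOn_comp_canonical_link (c := 1) hwpos hpsid hq fun x hx => ?_
    exact (hl1d x hx).congr_deriv (by ring)
  · refine convexOn_comp_canonical_link (c := 0) hwpos hpsid hq fun x hx => ?_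
    exact (hln1d x hx).congr_deriv (by ring)
end

section
/- Let ℓ be a proper CPE loss whose partial losses ℓ₁, ℓ₋₁ are differentiable and convex on (0,1), and suppose the weight function w(x) = ℓ₋₁′(x)/x is not identically zero on (0,1). Then w(x) > 0 for every x ∈ (0,1), and ℓ is strictly proper on (0,1): for every η ∈ (0,1), η̂ = η is the unique minimiser of η̂ ↦ L(η,η̂) over (0,1). -/
/-!
At an interior minimiser `p` of `L(η, ·)` the derivative `η l1' p + (1 - η) ln1' p` vanishes
(`deriv_eq_zero_of_risk_le`). Taking `p = η`, properness gives `x l1' x + (1 - x) ln1' x = 0`, that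
is, `ln1' x = x w x` and `l1' x = -(1 - x) w x`. Properness also makes `ln1 - l1`, whose derivative
is `w`, monotone, so `w ≥ 0`. By convexity `x w x` is nondecreasing and `(1 - x) w x` is
nonincreasing, so a zero of `w` propagates to its left by the former and to its right by the
latter; hence `w` vanishes nowhere. Finally, the derivative of `L(η, ·)` at `p` is `w p * (p - η)`,
which is nonzero for `p ≠ η`, so no such `p` is a minimiser.
-/

open Set

/-- First-order condition: a `p` in `(0,1)` whose risk is at most the optimal risk is a critical
point of the conditional risk `L(η, ·)`. -/
lemma deriv_eq_zero_of_risk_le {l1 ln1 : ℝ → ℝ} {a b η p : ℝ}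
    (hp : p ∈ Ioo (0:ℝ) 1) (ha : HasDerivAt l1 a p) (hb : HasDerivAt ln1 b p)
    (hmin : ∀ q ∈ Icc (0:ℝ) 1,
      η * l1 η + (1 - η) * ln1 η ≤ η * l1 q + (1 - η) * ln1 q)
    (hle : η * l1 p + (1 - η) * ln1 p ≤ η * l1 η + (1 - η) * ln1 η) :
    η * a + (1 - η) * b = 0 := by
  have hloc : IsLocalMin (fun q => η * l1 q + (1 - η) * ln1 q) p := by
    filter_upwards [isOpen_Ioo.mem_nhds hp] with q hq
    exact hle.trans (hmin q (Ioo_subset_Icc_self hq))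
  exact hloc.hasDerivAt_eq_zero ((ha.const_mul η).add (hb.const_mul (1 - η)))

/-- A proper CPE loss with partial losses differentiable and convex on `(0,1)`, whose
weight function `w(x) = ln1'(x)/x` is not identically zero, has `w > 0` everywhere on
`(0,1)` and is strictly proper on `(0,1)`. -/
theorem convex_proper_loss_is_strictly_proper
    (l1 ln1 l1' ln1' : ℝ → ℝ)
    (hl1nn : ∀ x ∈ Icc (0:ℝ) 1, 0 ≤ l1 x)
    (hln1nn : ∀ x ∈ Icc (0:ℝ) 1, 0 ≤ ln1 x)
    (hl1d : ∀ x ∈ Ioo (0:ℝ) 1, HasDerivAt l1 (l1' x) x)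
    (hln1d : ∀ x ∈ Ioo (0:ℝ) 1, HasDerivAt ln1 (ln1' x) x)
    (hl1conv : ConvexOn ℝ (Ioo (0:ℝ) 1) l1)
    (hln1conv : ConvexOn ℝ (Ioo (0:ℝ) 1) ln1)
    (hproper : ∀ η ∈ Icc (0:ℝ) 1, ∀ p ∈ Icc (0:ℝ) 1,
      η * l1 η + (1 - η) * ln1 η ≤ η * l1 p + (1 - η) * ln1 p)
    (hw : ∃ x ∈ Ioo (0:ℝ) 1, ln1' x / x ≠ 0) :
    (∀ x ∈ Ioo (0:ℝ) 1, 0 < ln1' x / x) ∧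
    (∀ η ∈ Ioo (0:ℝ) 1, ∀ p ∈ Ioo (0:ℝ) 1, p ≠ η →
      η * l1 η + (1 - η) * ln1 η < η * l1 p + (1 - η) * ln1 p) := by
  have hsub : Ioo (0:ℝ) 1 ⊆ Icc 0 1 := Ioo_subset_Icc_self
  have hstat : ∀ x ∈ Ioo (0:ℝ) 1, x * l1' x + (1 - x) * ln1' x = 0 := fun x hx =>
    deriv_eq_zero_of_risk_le hx (hl1d x hx) (hln1d x hx) (hproper x (hsub hx)) le_rfl
  have hmono : MonotoneOn (ln1 - l1) (Ioo (0:ℝ) 1) := by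
    intro x hx y hy hxy
    rcases hxy.eq_or_lt with rfl | hlt
    · exact le_rfl
    -- Adding the properness inequalities at `x` and at `y` leaves `(y - x) * (g y - g x) ≥ 0`, `g = ln1 - l1`.
    have h1 := hproper x (hsub hx) y (hsub hy)
    have h2 := hproper y (hsub hy) x (hsub hx)
    have h3 : 0 ≤ (y - x) * ((ln1 y - l1 y) - (ln1 x - l1 x)) := by linarith
    exact sub_nonneg.1 (nonneg_of_mul_nonneg_right h3 (sub_pos.2 hlt))
  have hdiff : ∀ x ∈ Ioo (0:ℝ) 1, 0 ≤ ln1' x - l1' x := by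
    intro x hx
    have h := hmono.derivWithin_nonneg (x := x)
    rwa [derivWithin_of_isOpen isOpen_Ioo hx, ((hln1d x hx).sub (hl1d x hx)).deriv] at h
  -- `ln1' x = x * (ln1' x - l1' x)` by stationarity, so the sign passes to `ln1'`.
  have hnn : ∀ x ∈ Ioo (0:ℝ) 1, 0 ≤ ln1' x := by
    intro x hx
    have h := mul_nonneg hx.1.le (hdiff x hx)
    linarith [hstat x hx]
  have hmono_of : ∀ f f' : ℝ → ℝ, ConvexOn ℝ (Ioo (0:ℝ) 1) f →
      (∀ x ∈ Ioo (0:ℝ) 1, HasDerivAt f (f' x) x) →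
      ∀ x ∈ Ioo (0:ℝ) 1, ∀ y ∈ Ioo (0:ℝ) 1, x ≤ y → f' x ≤ f' y := by
    intro f f' hf hd x hx y hy hxy
    have h := hf.monotoneOn_deriv (fun z hz => (hd z hz).differentiableAt) hx hy hxy
    rwa [(hd x hx).deriv, (hd y hy).deriv] at h
  have hpos : ∀ x ∈ Ioo (0:ℝ) 1, 0 < ln1' x := by
    intro x hx
    refine (hnn x hx).lt_of_ne' fun h0 => ?_
    obtain ⟨y, hy, hwy⟩ := hw
    apply hwy
    suffices h : ln1' y = 0 by rw [h, zero_div]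
    refine le_antisymm ?_ (hnn y hy)
    rcases le_total y x with hyx | hxy
    · exact h0 ▸ hmono_of ln1 ln1' hln1conv hln1d y hy x hx hyx
    · have hx1 : l1' x = 0 := by
        have h := hstat x hx
        rw [h0, mul_zero, add_zero] at h
        exact (mul_eq_zero.1 h).resolve_left hx.1.ne'
      have h1 := hmono_of l1 l1' hl1conv hl1d x hx y hy hxy
      rw [hx1] at h1
      have h2 := mul_nonneg hy.1.le h1
      have h3 : (1 - y) * ln1' y ≤ 0 := by linarith [hstat y hy]
      exact nonpos_of_mul_nonpos_right h3 (sub_pos.2 hy.2)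
  refine ⟨fun x hx => div_pos (hpos x hx) hx.1, fun η hη p hp hne => ?_⟩
  by_contra hlt
  have hcrit := deriv_eq_zero_of_risk_le hp (hl1d p hp) (hln1d p hp) (hproper η (hsub hη))
    (not_lt.1 hlt)
  -- Eliminating `l1' p` between the critical-point equation and stationarity at `p`.
  have h : (p - η) * ln1' p = 0 := by linear_combination p * hcrit - η * hstat p hp
  rcases mul_eq_zero.1 h with h | h
  · exact hne (sub_eq_zero.1 h)
  · exact (hpos p hp).ne' h
end

section
/- Let ℓ be a proper CPE loss whose partial losses are differentiable and convex on (0,1) and whose weight function w(x) = ℓ₋₁′(x)/x is not identically zero on (0,1). Then for every α ∈ (0,1/2) and every η ∈ [0,1] with η ≠ 1/2, ℓ is not α-robust at η: the set of minimisers H(ℓ,η_α) is disjoint from H(ℓ,η), where η_α = α·(1−η) + (1−α)·η. -/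
/-!
Write `L(η, p) = η ℓ₁(p) + (1-η) ℓ₋₁(p)`, which is affine in `η`. If `p` minimises both `L(η, ·)`
and `L(b, ·)` with `η ≠ b`, then for `q` strictly between `η` and `b` the affine function
`t ↦ L(t, q) - L(t, p)` is nonnegative at `η` and `b` and, by propriety, nonpositive at `q`. Hence it
vanishes identically, so `ℓ₋₁(q) = ℓ₋₁(p)` (`partial_eq_of_common_minimiser`). Thus `ℓ₋₁` is constant
on an open interval and `ℓ₋₁'` has a zero `q` in `(0,1)`.

Propriety also gives the stationarity identity `x ℓ₁'(x) + (1-x) ℓ₋₁'(x) = 0`, so `ℓ₁'(q) = 0` too.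
By convexity both derivatives are monotone, so at any `x` they are both `≤ 0` or both `≥ 0`
according to the side of `q`, and stationarity at `x` forces both to vanish. This contradicts the
weight function not being identically zero.
-/

open Set

/-- An affine function `t ↦ t A + (1-t) B` that is nonnegative at `a` and `b` and nonpositive at a
point strictly between them vanishes identically; `B` is its value at `0`. -/
lemma affine_eq_zero {a b q A B : ℝ} (haq : a < q) (hqb : q < b)
    (ha : 0 ≤ a * A + (1 - a) * B) (hb : 0 ≤ b * A + (1 - b) * B)
    (hq : q * A + (1 - q) * B ≤ 0) : B = 0 := by
  -- `A - B` is the slope: it is `≤ 0` by comparing `a` with `q`, and `≥ 0` by comparing `q` with `b`.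
  have h1 : A - B ≤ 0 := by
    by_contra! h
    nlinarith [mul_pos (sub_pos.2 haq) h]
  have h2 : 0 ≤ A - B := by
    by_contra! h
    nlinarith [mul_pos (sub_pos.2 hqb) (neg_pos.2 h)]
  have h3 : A = B := by linarith
  subst h3
  linarith

lemma partial_eq_of_common_minimiser {l1 ln1 : ℝ → ℝ}
    (hproper : ∀ η ∈ Icc (0:ℝ) 1, ∀ p ∈ Icc (0:ℝ) 1,
      η * l1 η + (1 - η) * ln1 η ≤ η * l1 p + (1 - η) * ln1 p)
    {a b p q : ℝ} (ha0 : 0 ≤ a) (hb1 : b ≤ 1) (hp : p ∈ Icc (0:ℝ) 1) (hq : q ∈ Ioo a b)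
    (ha : ∀ r ∈ Icc (0:ℝ) 1, a * l1 p + (1 - a) * ln1 p ≤ a * l1 r + (1 - a) * ln1 r)
    (hb : ∀ r ∈ Icc (0:ℝ) 1, b * l1 p + (1 - b) * ln1 p ≤ b * l1 r + (1 - b) * ln1 r) :
    ln1 q = ln1 p := by
  have hq01 : q ∈ Icc (0:ℝ) 1 := ⟨by linarith [hq.1], by linarith [hq.2]⟩
  have := affine_eq_zero (A := l1 q - l1 p) (B := ln1 q - ln1 p) hq.1 hq.2
    (by linarith [ha q hq01]) (by linarith [hb q hq01]) (by linarith [hproper q hq01 p hp])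
  linarith

/-- The first-order condition for `x` to minimise `L(x, ·)`. -/
lemma stationarity {l1 ln1 l1' ln1' : ℝ → ℝ}
    (hl1d : ∀ x ∈ Ioo (0:ℝ) 1, HasDerivAt l1 (l1' x) x)
    (hln1d : ∀ x ∈ Ioo (0:ℝ) 1, HasDerivAt ln1 (ln1' x) x)
    (hproper : ∀ η ∈ Icc (0:ℝ) 1, ∀ p ∈ Icc (0:ℝ) 1,
      η * l1 η + (1 - η) * ln1 η ≤ η * l1 p + (1 - η) * ln1 p)
    {x : ℝ} (hx : x ∈ Ioo (0:ℝ) 1) : x * l1' x + (1 - x) * ln1' x = 0 := by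
  have hd : HasDerivAt (fun p => x * l1 p + (1 - x) * ln1 p) (x * l1' x + (1 - x) * ln1' x) x :=
    ((hl1d x hx).const_mul x).add ((hln1d x hx).const_mul (1 - x))
  refine IsLocalMin.hasDerivAt_eq_zero ?_ hd
  filter_upwards [isOpen_Ioo.mem_nhds hx] with p hp
  exact hproper x (Ioo_subset_Icc_self hx) p (Ioo_subset_Icc_self hp)

lemma deriv_mono_of_convexOn {f f' : ℝ → ℝ} (hf : ConvexOn ℝ (Ioo (0:ℝ) 1) f)
    (hd : ∀ x ∈ Ioo (0:ℝ) 1, HasDerivAt f (f' x) x) {x y : ℝ}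
    (hx : x ∈ Ioo (0:ℝ) 1) (hy : y ∈ Ioo (0:ℝ) 1) (hxy : x < y) : f' x ≤ f' y :=
  (hf.le_slope_of_hasDerivAt hx hy hxy (hd x hx)).trans
    (hf.slope_le_of_hasDerivAt hx hy hxy (hd y hy))

/-- If `p` minimises the conditional risk at two distinct probabilities, then `ℓ₋₁' = 0` on
`(0,1)`. -/
lemma deriv_eq_zero_of_common_minimiser {l1 ln1 l1' ln1' : ℝ → ℝ}
    (hl1d : ∀ x ∈ Ioo (0:ℝ) 1, HasDerivAt l1 (l1' x) x)
    (hln1d : ∀ x ∈ Ioo (0:ℝ) 1, HasDerivAt ln1 (ln1' x) x)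
    (hl1conv : ConvexOn ℝ (Ioo (0:ℝ) 1) l1)
    (hln1conv : ConvexOn ℝ (Ioo (0:ℝ) 1) ln1)
    (hproper : ∀ η ∈ Icc (0:ℝ) 1, ∀ p ∈ Icc (0:ℝ) 1,
      η * l1 η + (1 - η) * ln1 η ≤ η * l1 p + (1 - η) * ln1 p)
    {a b p : ℝ} (ha0 : 0 ≤ a) (hab : a < b) (hb1 : b ≤ 1) (hp : p ∈ Icc (0:ℝ) 1)
    (ha : ∀ r ∈ Icc (0:ℝ) 1, a * l1 p + (1 - a) * ln1 p ≤ a * l1 r + (1 - a) * ln1 r)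
    (hb : ∀ r ∈ Icc (0:ℝ) 1, b * l1 p + (1 - b) * ln1 p ≤ b * l1 r + (1 - b) * ln1 r)
    {x : ℝ} (hx : x ∈ Ioo (0:ℝ) 1) : ln1' x = 0 := by
  obtain ⟨q, hq⟩ := exists_between hab
  have hq01 : q ∈ Ioo (0:ℝ) 1 := ⟨by linarith [hq.1], by linarith [hq.2]⟩
  have hn : ln1' q = 0 := by
    have hconst : HasDerivAt ln1 0 q := by
      refine (hasDerivAt_const q (ln1 p)).congr_of_eventuallyEq ?_
      filter_upwards [isOpen_Ioo.mem_nhds hq] with r hr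
      exact partial_eq_of_common_minimiser hproper ha0 hb1 hp hr ha hb
    exact (hln1d q hq01).unique hconst
  have h1 : l1' q = 0 := by
    have := stationarity hl1d hln1d hproper hq01
    rw [hn, mul_zero, add_zero] at this
    exact (mul_eq_zero.1 this).resolve_left hq01.1.ne'
  have hs := stationarity hl1d hln1d hproper hx
  have hx1 : 0 < 1 - x := sub_pos.2 hx.2
  rcases lt_trichotomy x q with h | h | h
  · have e1 := deriv_mono_of_convexOn hl1conv hl1d hx hq01 h
    have e2 := deriv_mono_of_convexOn hln1conv hln1d hx hq01 h
    rw [h1] at e1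
    rw [hn] at e2
    have := mul_nonpos_of_nonneg_of_nonpos hx.1.le e1
    by_contra hne
    linarith [mul_neg_of_pos_of_neg hx1 (lt_of_le_of_ne e2 hne)]
  · rw [h, hn]
  · have e1 := deriv_mono_of_convexOn hl1conv hl1d hq01 hx h
    have e2 := deriv_mono_of_convexOn hln1conv hln1d hq01 hx h
    rw [h1] at e1
    rw [hn] at e2
    have := mul_nonneg hx.1.le e1
    by_contra hne
    linarith [mul_pos hx1 (lt_of_le_of_ne e2 (Ne.symm hne))]

/-- A proper CPE loss with partial losses differentiable and convex on `(0,1)` and with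
weight function not identically zero is not `α`-robust at any `η ≠ 1/2`: for every
`α ∈ (0,1/2)` and `η ∈ [0,1]` with `η ≠ 1/2`, the minimisers of the conditional risk at
the `α`-corrupted probability `η_α = α(1-η) + (1-α)η` are disjoint from the minimisers at
`η`. -/
theorem convex_proper_loss_not_robust_to_label_noise
    (l1 ln1 l1' ln1' : ℝ → ℝ)
    (hl1nn : ∀ x ∈ Icc (0:ℝ) 1, 0 ≤ l1 x)
    (hln1nn : ∀ x ∈ Icc (0:ℝ) 1, 0 ≤ ln1 x)
    (hl1d : ∀ x ∈ Ioo (0:ℝ) 1, HasDerivAt l1 (l1' x) x)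
    (hln1d : ∀ x ∈ Ioo (0:ℝ) 1, HasDerivAt ln1 (ln1' x) x)
    (hl1conv : ConvexOn ℝ (Ioo (0:ℝ) 1) l1)
    (hln1conv : ConvexOn ℝ (Ioo (0:ℝ) 1) ln1)
    (hproper : ∀ η ∈ Icc (0:ℝ) 1, ∀ p ∈ Icc (0:ℝ) 1,
      η * l1 η + (1 - η) * ln1 η ≤ η * l1 p + (1 - η) * ln1 p)
    (hw : ∃ x ∈ Ioo (0:ℝ) 1, ln1' x / x ≠ 0) :
    ∀ α ∈ Ioo (0:ℝ) (1/2), ∀ η ∈ Icc (0:ℝ) 1, η ≠ 1/2 →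
      {p | p ∈ Icc (0:ℝ) 1 ∧ ∀ r ∈ Icc (0:ℝ) 1,
          (α * (1 - η) + (1 - α) * η) * l1 p +
              (1 - (α * (1 - η) + (1 - α) * η)) * ln1 p ≤
            (α * (1 - η) + (1 - α) * η) * l1 r +
              (1 - (α * (1 - η) + (1 - α) * η)) * ln1 r} ∩
        {p | p ∈ Icc (0:ℝ) 1 ∧ ∀ r ∈ Icc (0:ℝ) 1,
          η * l1 p + (1 - η) * ln1 p ≤ η * l1 r + (1 - η) * ln1 r} = ∅ := by
  rintro α ⟨hα0, hα1⟩ η ⟨hη0, hη1⟩ hη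
  obtain ⟨x, hx, hwx⟩ := hw
  rw [eq_empty_iff_forall_notMem]
  rintro p ⟨⟨hp, hb⟩, -, ha⟩
  apply hwx
  generalize hbdef : α * (1 - η) + (1 - α) * η = b at hb
  have hb0 : 0 ≤ b := by nlinarith
  have hb1 : b ≤ 1 := by nlinarith
  have hne : η ≠ b := by
    intro h
    -- The corruption shifts `η` by `α (1 - 2η)`, which is nonzero for `η ≠ 1/2`.
    have h0 : α * (1 - 2 * η) = 0 := by linarith
    rcases mul_eq_zero.1 h0 with h | h
    · linarith
    · exact hη (by linarith)
  have : ln1' x = 0 := by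
    rcases lt_or_gt_of_ne hne with h | h
    · exact deriv_eq_zero_of_common_minimiser hl1d hln1d hl1conv hln1conv hproper
        hη0 h hb1 hp ha hb hx
    · exact deriv_eq_zero_of_common_minimiser hl1d hln1d hl1conv hln1conv hproper
        hb0 h hη1 hp hb ha hx
  rw [this, zero_div]
end
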